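/- arXiv:math/0609634 — 2 statements merged into one kernel-verified Lean document; each statement's English description precedes it below -/
import Mathlib

section
/- For every natural number k there exists an abelian group G of cardinality ℶ_{k+1} which is ℵ_{k+1}-free, together with a non-zero element z ∈ G such that the cyclic subgroup ℤz generated by z is a pure subgroup of G but ℤz is not a direct summand of G (there is no subgroup H of G such that G is the internal direct sum of ℤz and H). -/
open Cardinal

/-- A subgroup `H` of an abelian group `G` is pure if `H ∩ nG = nH` for every positive
integer `n`; equivalently, every element of `H` divisible by `n` in `G` is divisible by
`n` in `H`. -/
def IsPureAddSubgroup {G : Type*} [AddCommGroup G] (H : AddSubgroup G) : Prop :=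
  ∀ n : ℕ, 0 < n → ∀ x ∈ H, (∃ y : G, n • y = x) → ∃ y ∈ H, n • y = x

/-!
Let `Λ` be a set of `(k + 1)`-tuples `η` of infinite sequences. The group `G` is generated by `z`,
elements `x_{i,n,t}` indexed by tuples `t`, and elements `y_{η,n}` subject to
`3 y_{η,n+1} = y_{η,n} + ∑ i, x_{i,n,η↾(i,n)} + a η n z`, where `η↾(i,n)` is `η` with its `i`-th
sequence truncated to the first `n` terms.

Freeness: any `ℵ_k` tuples can be well-ordered so that, for each `η`, in some direction `i` almost
all truncations of `η` are new. The corresponding `x_{i,n,η↾(i,n)}` can then be traded for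
`y_{η,n}`, which yields a basis containing `z`. Passing from `ℵ_m` to `ℵ_{m+1}` costs one direction:
rank the tuples by the maximal rank of their coordinates; if `η` agrees off direction `i` with a
tuple of smaller rank, then the maximum is attained only at `i`.

Non-splitting: the terms of the `i`-th sequence are functions of all the later sequences, so `η`
can be built one direction at a time to predict the values on the `x_{i,n,η↾(i,n)}` of any given
homomorphism `f : G → ℤ`. With `a η n` equal to `1` minus the sum of
the predictions, `f z = 1` forces `3 f(y_{η,n+1}) = f(y_{η,n}) + 1` for all `n`, which is impossible
in `ℤ`.
-/

open Filter Finsupp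

universe u

/-! ### Submodules of free modules over a principal ideal domain -/

theorem linearIndependent_of_triangular {ι R M N W : Type*} [CommRing R] [IsDomain R]
    [AddCommGroup M] [Module R M] [AddCommGroup N] [Module R N] [Module.IsTorsionFree R N]
    [LinearOrder W] {v : ι → M} (rank : ι → W) (pivot : ι → M →ₗ[R] N)
    (pivot_self : ∀ i, pivot i (v i) ≠ 0)
    (pivot_of_le : ∀ i j, j ≠ i → rank j ≤ rank i → pivot i (v j) = 0) :
    LinearIndependent R v := by
  rw [linearIndependent_iff]
  intro c hc
  by_contra hne
  obtain ⟨i, hi, hmax⟩ := c.support.exists_max_image rank (support_nonempty_iff.2 hne)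
  have hzero : c i • pivot i (v i) = 0 := by
    calc c i • pivot i (v i) = ∑ j ∈ c.support, c j • pivot i (v j) := by
          rw [Finset.sum_eq_single_of_mem i hi]
          intro j hj hji
          rw [pivot_of_le i j hji (hmax j hj), smul_zero]
      _ = pivot i (linearCombination R v c) := by
          simp only [linearCombination_apply, Finsupp.sum, map_sum, map_smul]
      _ = 0 := by rw [hc, map_zero]
  exact (smul_ne_zero (mem_support_iff.1 hi) (pivot_self i)) hzero

section SubmoduleOfFinsupp

variable {ι R : Type*} [CommRing R] [LinearOrder ι]

/-- The elements of `N` all of whose coordinates beyond `i` vanish. -/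
noncomputable def initialPart (N : Submodule R (ι →₀ R)) (i : ι) : Submodule R (ι →₀ R) :=
  N ⊓ supported R R (Set.Iic i)

theorem mem_initialPart_max_support {N : Submodule R (ι →₀ R)} {f : ι →₀ R} (hf : f ∈ N)
    (hne : f.support.Nonempty) : f ∈ initialPart N (f.support.max' hne) :=
  ⟨hf, fun _ hj => f.support.le_max' _ hj⟩

theorem apply_eq_zero_of_mem_initialPart {N : Submodule R (ι →₀ R)} {f : ι →₀ R} {i j : ι}
    (hf : f ∈ initialPart N i) (hij : i < j) : f j = 0 :=
  notMem_support_iff.1 fun hj => hij.not_ge (hf.2 hj)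

theorem exists_mem_initialPart_forall_dvd [IsPrincipalIdealRing R] (N : Submodule R (ι →₀ R))
    (i : ι) : ∃ g ∈ initialPart N i, ∀ f ∈ initialPart N i, g i ∣ f i := by
  let I : Ideal R := (initialPart N i).map (lapply i)
  obtain ⟨g, hg, hgen⟩ := Submodule.IsPrincipal.generator_mem I
  refine ⟨g, hg, fun f hf => ?_⟩
  rw [← lapply_apply (R := R) i g, hgen]
  exact (Submodule.IsPrincipal.mem_iff_generator_dvd I).1 ⟨f, hf, rfl⟩

theorem initialPart_le_span [WellFoundedLT ι] {N : Submodule R (ι →₀ R)} {g : ι → ι →₀ R}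
    (hg : ∀ i, g i ∈ initialPart N i) (hdvd : ∀ i, ∀ f ∈ initialPart N i, g i i ∣ f i) (i : ι) :
    initialPart N i ≤ Submodule.span R (g '' {j | g j j ≠ 0}) := by
  induction i using WellFoundedLT.induction with
  | ind i ih =>
  have mem_of_apply_eq_zero : ∀ f ∈ initialPart N i, f i = 0 →
      f ∈ Submodule.span R (g '' {j | g j j ≠ 0}) := by
    intro f hf hfi
    rcases f.support.eq_empty_or_nonempty with hempty | hne
    · rw [support_eq_empty.1 hempty]
      exact Submodule.zero_mem _
    · have hmax := f.support.max'_mem hne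
      have hlt : f.support.max' hne < i :=
        lt_of_le_of_ne (hf.2 hmax) fun h => mem_support_iff.1 hmax (h ▸ hfi)
      exact ih _ hlt (mem_initialPart_max_support hf.1 hne)
  intro f hf
  obtain ⟨c, hc⟩ := hdvd i f hf
  by_cases hgi : g i i = 0
  · exact mem_of_apply_eq_zero f hf (by rw [hc, hgi, zero_mul])
  · have hgspan : g i ∈ Submodule.span R (g '' {j | g j j ≠ 0}) :=
      Submodule.subset_span ⟨i, hgi, rfl⟩
    have hsub : f - c • g i ∈ Submodule.span R (g '' {j | g j j ≠ 0}) :=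
      mem_of_apply_eq_zero _ (sub_mem hf (Submodule.smul_mem _ c (hg i)))
        (by simp [hc, mul_comm])
    exact (Submodule.sub_mem_iff_left _ (Submodule.smul_mem _ c hgspan)).1 hsub

theorem free_submodule_finsupp [WellFoundedLT ι] [IsDomain R] [IsPrincipalIdealRing R]
    (N : Submodule R (ι →₀ R)) : Module.Free R N := by
  choose g hg hdvd using exists_mem_initialPart_forall_dvd N
  have hli : LinearIndependent R fun i : {i | g i i ≠ 0} => g i :=
    linearIndependent_of_triangular (fun i => i) (fun i => lapply (i : ι)) (fun i => i.2)
      fun i j hji hle => apply_eq_zero_of_mem_initialPart (hg j)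
        (lt_of_le_of_ne hle (Subtype.coe_ne_coe.2 hji))
  have hspan : Submodule.span R (Set.range fun i : {i | g i i ≠ 0} => g i) = N := by
    rw [← Set.image_eq_range]
    refine le_antisymm (Submodule.span_le.2 ?_) fun f hf => ?_
    · rintro _ ⟨i, -, rfl⟩
      exact (hg i).1
    · rcases f.support.eq_empty_or_nonempty with hempty | hne
      · rw [support_eq_empty.1 hempty]
        exact Submodule.zero_mem _
      · exact initialPart_le_span hg hdvd _ (mem_initialPart_max_support hf hne)
  exact Module.Free.of_basis ((Module.Basis.span hli).map (LinearEquiv.ofEq _ _ hspan))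

end SubmoduleOfFinsupp

theorem free_of_injective {R M P : Type*} [CommRing R] [IsDomain R] [IsPrincipalIdealRing R]
    [AddCommGroup M] [Module R M] [AddCommGroup P] [Module R P] [Module.Free R P]
    (f : M →ₗ[R] P) (hf : Function.Injective f) : Module.Free R M := by
  obtain ⟨_, _⟩ := exists_wellFoundedLT (Module.Free.ChooseBasisIndex R P)
  let toFinsupp := (Module.Free.chooseBasis R P).repr.toLinearMap ∘ₗ f
  have hinj : Function.Injective toFinsupp :=
    (Module.Free.chooseBasis R P).repr.injective.comp hf
  have := free_submodule_finsupp (LinearMap.range toFinsupp)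
  exact Module.Free.of_equiv (LinearEquiv.ofInjective toFinsupp hinj).symm

/-! ### Pure and complemented cyclic subgroups -/

theorem isPureAddSubgroup_zmultiples_of_local_retractions {G : Type*} [AddCommGroup G] {z : G}
    (h : ∀ y : G, ∃ (S : AddSubgroup G) (hz : z ∈ S) (π : S →+ ℤ), y ∈ S ∧ π ⟨z, hz⟩ = 1) :
    IsPureAddSubgroup (AddSubgroup.zmultiples z) := by
  rintro n - _ hx ⟨y, rfl⟩
  obtain ⟨c, hc⟩ := AddSubgroup.mem_zmultiples_iff.1 hx
  obtain ⟨S, hz, π, hy, hπ⟩ := h y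
  have hrel : c • (⟨z, hz⟩ : S) = n • ⟨y, hy⟩ := Subtype.ext hc
  have hcoeff : c = n * π ⟨y, hy⟩ := by
    simpa only [map_zsmul, map_nsmul, hπ, smul_eq_mul, nsmul_eq_mul, mul_one]
      using congrArg π hrel
  refine ⟨π ⟨y, hy⟩ • z, AddSubgroup.zsmul_mem_zmultiples z _, ?_⟩
  rw [← hc, hcoeff, mul_smul, natCast_zsmul]

theorem exists_addMonoidHom_apply_eq_one_of_isCompl {G : Type*} [AddCommGroup G]
    [Module.IsTorsionFree ℤ G] {z : G} (hz : z ≠ 0) {H : AddSubgroup G}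
    (hH : IsCompl (AddSubgroup.zmultiples z) H) : ∃ f : G →+ ℤ, f z = 1 := by
  have hcompl : IsCompl (ℤ ∙ z) (AddSubgroup.toIntSubmodule H) := by
    rw [← Submodule.span_singleton_toAddSubgroup_eq_zmultiples] at hH
    exact AddSubgroup.toIntSubmodule.isCompl_iff.1 hH
  let projection := Submodule.projectionOnto _ _ hcompl
  let coordinate := LinearEquiv.toSpanNonzeroSingleton ℤ G z hz
  refine ⟨(coordinate.symm.toLinearMap ∘ₗ projection).toAddMonoidHom, ?_⟩
  have hproj : projection z = coordinate 1 := by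
    rw [LinearEquiv.toSpanNonzeroSingleton_one]
    exact Submodule.projectionOnto_apply_left hcompl ⟨z, Submodule.mem_span_singleton_self z⟩
  change coordinate.symm (projection z) = 1
  rw [hproj, coordinate.symm_apply_apply]

-- The odd integers `2 * b n - 1` would satisfy `3 * (2 * b (n + 1) - 1) = 2 * b n - 1`.
theorem not_forall_three_mul_succ_eq_add_one (b : ℕ → ℤ) :
    ¬ ∀ n, 3 * b (n + 1) = b n + 1 := fun h =>
  not_strictAnti_of_wellFoundedLT (fun n => (2 * b n - 1).natAbs)
    (strictAnti_nat_of_succ_lt fun n => by have := h n; omega)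

/-! ### Free rankings -/

theorem exists_ordinal_lt_iff_lt {α : Type u} {W : Type*} [LinearOrder W] [WellFoundedLT W]
    (f : α → W) : ∃ ρ : α → Ordinal.{u}, ∀ a b, ρ a < ρ b ↔ f a < f b := by
  let r : α → α → Prop := fun a b => f a < f b
  have : IsWellFounded α r := ⟨InvImage.wf f wellFounded_lt⟩
  have rank_le : ∀ a b, f a ≤ f b → IsWellFounded.rank r a ≤ IsWellFounded.rank r b := by
    intro a b hab
    rw [IsWellFounded.rank_eq]
    exact Ordinal.iSup_le fun c =>
      Order.succ_le_of_lt (IsWellFounded.rank_lt_of_rel (r := r) (c.2.trans_le hab))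
  exact ⟨IsWellFounded.rank r, fun a b => ⟨fun hab => lt_of_not_ge fun hba =>
    hab.not_ge (rank_le b a hba), fun hab => IsWellFounded.rank_lt_of_rel (r := r) hab⟩⟩

theorem exists_ordinal_forall_mk_setOf_le {α : Type u} {κ : Cardinal.{u}} (hκ : ℵ₀ ≤ κ)
    {C : Set α} (hC : #C ≤ Order.succ κ) :
    ∃ r : α → Ordinal.{u}, (∀ x, r x < (Order.succ κ).ord) ∧
      ∀ β < (Order.succ κ).ord, #{x ∈ C | r x ≤ β} ≤ κ := by
  classical
  have hlim := isSuccLimit_ord (hκ.trans (Order.le_succ κ))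
  obtain ⟨e⟩ : #C ≤ #(Order.succ κ).ord.ToType := by rwa [mk_ord_toType]
  let r : α → Ordinal.{u} := fun x =>
    if hx : x ∈ C then (Ordinal.ToType.mk.symm (e ⟨x, hx⟩)).1 else 0
  have hr : ∀ x (hx : x ∈ C), r x = (Ordinal.ToType.mk.symm (e ⟨x, hx⟩)).1 :=
    fun x hx => dif_pos hx
  have hinj : Set.InjOn r C := fun x hx y hy hxy => by
    rw [hr x hx, hr y hy] at hxy
    simpa using Subtype.ext hxy
  refine ⟨r, fun x => ?_, fun β hβ => ?_⟩
  · by_cases hx : x ∈ C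
    · rw [hr x hx]
      exact (Ordinal.ToType.mk.symm (e ⟨x, hx⟩)).2
    · simpa only [r, dif_neg hx, Ordinal.bot_eq_zero] using hlim.bot_lt
  · have hcard : #(Order.succ β).ToType ≤ κ := by
      rw [mk_toType]
      exact Order.lt_succ_iff.1 (lt_ord.1 (hlim.succ_lt hβ))
    let toSucc : {x ∈ C | r x ≤ β} → (Order.succ β).ToType := fun x =>
      Ordinal.ToType.mk ⟨r x, Order.lt_succ_iff.2 x.2.2⟩
    have htoSucc : Function.Injective toSucc := fun x y hxy =>
      Subtype.ext (hinj x.2.1 y.2.1 (congrArg Subtype.val (Ordinal.ToType.mk.injective hxy)))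
    exact (mk_le_of_injective htoSucc).trans hcard

/-- A ranking `ρ` of `M` is free for the truncations `tr` if, in some direction `i` allowed by
`u η`, almost all truncations of each `η ∈ M` differ from those of all `ν ∈ M` ranked before it.
This is the combinatorial form of the freeness of the groups `branchGroup` below. -/
def IsFreeRanking {ι Λ T W : Type*} [LT W] (tr : ι → ℕ → Λ → T) (u : Λ → Finset ι) (M : Set Λ)
    (ρ : Λ → W) : Prop :=
  Set.InjOn ρ M ∧ ∀ η ∈ M, ∃ i ∈ u η, ∀ᶠ n in atTop, ∀ ν ∈ M, ρ ν < ρ η → tr i n ν ≠ tr i n η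

theorem exists_isFreeRanking_of_layers {ι : Type*} {Λ : Type u} {T W : Type*} [LinearOrder W]
    [WellFoundedLT W] {tr : ι → ℕ → Λ → T} {u u' : Λ → Finset ι} {M : Set Λ} (σ : Λ → W)
    (hlayer : ∀ α, ∃ ρ : Λ → Ordinal.{u}, IsFreeRanking tr u' {η ∈ M | σ η = α} ρ)
    (hu' : ∀ η ∈ M, ∀ i ∈ u' η,
      i ∈ u η ∧ ∀ᶠ n in atTop, ∀ ν ∈ M, σ ν < σ η → tr i n ν ≠ tr i n η) :
    ∃ ρ : Λ → Ordinal.{u}, IsFreeRanking tr u M ρ := by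
  choose τ hτinj hτ using hlayer
  obtain ⟨ρ, hρ⟩ := exists_ordinal_lt_iff_lt
    fun η => (toLex (σ η, τ (σ η) η) : W ×ₗ Ordinal.{u})
  have lt_cases : ∀ {ν η}, ρ ν < ρ η → σ ν < σ η ∨ σ ν = σ η ∧ τ (σ η) ν < τ (σ η) η := by
    intro ν η hlt
    rcases Prod.Lex.toLex_lt_toLex.1 ((hρ ν η).1 hlt) with hσ | ⟨hσ, hτlt⟩
    · exact .inl hσ
    · change σ ν = σ η at hσ
      change τ (σ ν) ν < τ (σ η) η at hτlt
      exact .inr ⟨hσ, by rwa [hσ] at hτlt⟩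
  refine ⟨ρ, fun η hη ν hν heq => ?_, fun η hη => ?_⟩
  · have hlex := le_antisymm (not_lt.1 fun h => ((hρ ν η).2 h).ne' heq)
      (not_lt.1 fun h => ((hρ η ν).2 h).ne heq)
    obtain ⟨hσ, hτeq⟩ := Prod.mk.inj (toLex.injective hlex)
    exact hτinj (σ η) ⟨hη, rfl⟩ ⟨hν, hσ.symm⟩ (by rw [hτeq, hσ])
  · obtain ⟨i, hi, hsame⟩ := hτ (σ η) η ⟨hη, rfl⟩
    obtain ⟨hiu, hbelow⟩ := hu' η hη i hi
    refine ⟨i, hiu, ?_⟩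
    filter_upwards [hsame, hbelow] with n hn_same hn_below ν hν hlt
    rcases lt_cases hlt with hσ | ⟨hσ, hτlt⟩
    · exact hn_below ν hν hσ
    · exact hn_same ν ⟨hν, hσ⟩ hτlt

/-- The sequence with the terms of `s` from position `n` on replaced by `0`. -/
def truncateSeq {X : Type*} [Zero X] (n : ℕ) (s : ℕ → X) : ℕ → X := fun m =>
  if m < n then s m else 0

section Branches

variable {ι : Type u} {X : ι → Type u}

section MaxRank

variable [Fintype ι]

/-- The largest of the ranks of the coordinates of a tuple of sequences. -/
noncomputable def maxRank (r : ∀ i, (ℕ → X i) → Ordinal.{u}) (η : ∀ i, ℕ → X i) : Ordinal.{u} :=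
  Finset.univ.sup fun i => r i (η i)

theorem le_maxRank (r : ∀ i, (ℕ → X i) → Ordinal.{u}) (η : ∀ i, ℕ → X i) (i : ι) :
    r i (η i) ≤ maxRank r η :=
  Finset.le_sup (f := fun i => r i (η i)) (Finset.mem_univ i)

theorem mk_maxRank_eq_le {κ : Cardinal.{u}} (hκ : ℵ₀ ≤ κ) {M : Set (∀ i, ℕ → X i)}
    {r : ∀ i, (ℕ → X i) → Ordinal.{u}} {β : Ordinal.{u}}
    (hr : ∀ i, #{x ∈ (fun η => η i) '' M | r i x ≤ β} ≤ κ) :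
    #{η ∈ M | maxRank r η = β} ≤ κ := by
  let coordinates : {η ∈ M | maxRank r η = β} → ∀ i, {x ∈ (fun η => η i) '' M | r i x ≤ β} :=
    fun η i => ⟨η.1 i, ⟨η.1, η.2.1, rfl⟩, (le_maxRank r η.1 i).trans η.2.2.le⟩
  have hinj : Function.Injective coordinates := fun η ν h =>
    Subtype.ext (funext fun i => congrArg Subtype.val (congrFun h i))
  calc #{η ∈ M | maxRank r η = β}
      ≤ #(∀ i, {x ∈ (fun η => η i) '' M | r i x ≤ β}) := mk_le_of_injective hinj
    _ ≤ Cardinal.prod fun _ : ι => κ := by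
        rw [mk_pi]
        exact prod_le_prod _ _ hr
    _ = κ ^ Fintype.card ι := by rw [prod_const', mk_fintype, power_natCast]
    _ ≤ κ := power_nat_le hκ

end MaxRank

variable [DecidableEq ι] [∀ i, Zero (X i)]

/-- The truncation of a tuple of sequences at level `n` in direction `i`. The truncated tuple is
again a tuple of sequences, so that truncations and branches share one type. -/
def truncate (i : ι) (n : ℕ) (η : ∀ i, ℕ → X i) : ∀ i, ℕ → X i :=
  Function.update η i (truncateSeq n (η i))

theorem apply_eq_of_truncate_eq {i j : ι} {n : ℕ} {η ν : ∀ i, ℕ → X i}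
    (h : truncate i n η = truncate i n ν) (hji : j ≠ i) : η j = ν j := by
  simpa only [truncate, Function.update_of_ne hji] using congrFun h j

theorem eventually_truncate_ne (i : ι) {η ν : ∀ i, ℕ → X i} (hne : η ≠ ν) :
    ∀ᶠ n in atTop, truncate i n η ≠ truncate i n ν := by
  obtain ⟨j, hj⟩ := Function.ne_iff.1 hne
  by_cases hji : j = i
  · subst hji
    obtain ⟨m, hm⟩ := Function.ne_iff.1 hj
    filter_upwards [eventually_gt_atTop m] with n hn heq
    exact hm (by simpa [truncate, truncateSeq, hn] using congrFun (congrFun heq j) m)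
  · exact .of_forall fun n heq => hj (apply_eq_of_truncate_eq heq hji)

theorem exists_isFreeRanking_truncate_of_countable {M : Set (∀ i, ℕ → X i)} (hM : M.Countable)
    {u : (∀ i, ℕ → X i) → Finset ι} (hu : ∀ η ∈ M, (u η).Nonempty) :
    ∃ ρ : (∀ i, ℕ → X i) → Ordinal.{u}, IsFreeRanking truncate u M ρ := by
  obtain ⟨f, hf⟩ := Set.countable_iff_exists_injOn.1 hM
  refine ⟨fun η => f η, Nat.cast_injective.comp_injOn hf, fun η hη => ?_⟩
  obtain ⟨i, hi⟩ := hu η hη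
  have hfin : {ν ∈ M | f ν < f η}.Finite :=
    .of_finite_image ((Set.finite_Iio (f η)).subset (by rintro _ ⟨ν, hν, rfl⟩; exact hν.2))
      (hf.mono fun ν hν => hν.1)
  have hsep : ∀ᶠ n in atTop, ∀ ν ∈ {ν ∈ M | f ν < f η}, truncate i n ν ≠ truncate i n η :=
    (eventually_all_finite hfin).2 fun ν hν =>
      eventually_truncate_ne i (by rintro rfl; exact lt_irrefl _ hν.2)
  refine ⟨i, hi, ?_⟩
  filter_upwards [hsep] with n hn ν hν hlt
  exact hn ν ⟨hν, Nat.cast_lt.1 hlt⟩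

-- Agreement with a lower-ranked tuple off direction `i` forces the maximal rank into direction `i`.
theorem direction_unique_of_truncate_eq [Fintype ι] {r : ∀ i, (ℕ → X i) → Ordinal.{u}}
    {η ν ν' : ∀ i, ℕ → X i} {i i' : ι} {n n' : ℕ}
    (hν : maxRank r ν < maxRank r η) (h : truncate i n ν = truncate i n η)
    (hν' : maxRank r ν' < maxRank r η) (h' : truncate i' n' ν' = truncate i' n' η) : i = i' := by
  by_contra hne
  have rank_lt : ∀ j, r j (η j) < maxRank r η := fun j => by
    by_cases hj : j = i
    · rw [← apply_eq_of_truncate_eq h' (hj.trans_ne hne)]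
      exact (le_maxRank r ν' j).trans_lt hν'
    · rw [← apply_eq_of_truncate_eq h hj]
      exact (le_maxRank r ν j).trans_lt hν
  exact lt_irrefl (maxRank r η)
    ((Finset.sup_lt_iff (bot_le.trans_lt hν)).2 fun j _ => rank_lt j)

open Classical in
theorem exists_isFreeRanking_truncate [Finite ι] (m : ℕ) {M : Set (∀ i, ℕ → X i)} (hM : #M ≤ ℵ_ m)
    {u : (∀ i, ℕ → X i) → Finset ι} (hu : ∀ η ∈ M, m < (u η).card) :
    ∃ ρ : (∀ i, ℕ → X i) → Ordinal.{u}, IsFreeRanking truncate u M ρ := by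
  have := Fintype.ofFinite ι
  induction m generalizing M u with
  | zero =>
    refine exists_isFreeRanking_truncate_of_countable ?_ fun η hη => Finset.card_pos.1 (hu η hη)
    rw [← le_aleph0_iff_set_countable]
    simpa using hM
  | succ m ih =>
    have hsucc : #M ≤ Order.succ (ℵ_ m) := by rwa [succ_aleph, ← Nat.cast_add_one]
    choose r hr hsmall using fun i =>
      exists_ordinal_forall_mk_setOf_le (aleph0_le_aleph m)
        ((mk_image_le (f := fun η : ∀ i, ℕ → X i => η i) (s := M)).trans hsucc)
    let good : (∀ i, ℕ → X i) → ι → Prop := fun η i =>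
      ∀ᶠ n in atTop, ∀ ν ∈ M, maxRank r ν < maxRank r η → truncate i n ν ≠ truncate i n η
    have bad_unique : ∀ η i i', ¬ good η i → ¬ good η i' → i = i' := by
      intro η i i' hi hi'
      simp only [good, not_eventually, not_forall, not_not] at hi hi'
      obtain ⟨n, ν, -, hν, h⟩ := hi.exists
      obtain ⟨n', ν', -, hν', h'⟩ := hi'.exists
      exact direction_unique_of_truncate_eq hν h hν' h'
    refine exists_isFreeRanking_of_layers (u' := fun η => (u η).filter (good η)) (maxRank r)
      (fun β => ih ?_ ?_) fun η _ i hi => Finset.mem_filter.1 hi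
    · by_cases hβ : β < (Order.succ (ℵ_ (m : Ordinal.{u}))).ord
      · exact mk_maxRank_eq_le (aleph0_le_aleph m) fun i => hsmall i β hβ
      · have hempty : {η ∈ M | maxRank r η = β} = ∅ := by
          rw [Set.eq_empty_iff_forall_notMem]
          rintro η ⟨-, rfl⟩
          refine hβ ((Finset.sup_lt_iff ?_).2 fun i _ => hr i _)
          exact (isSuccLimit_ord ((aleph0_le_aleph m).trans (Order.le_succ _))).bot_lt
        simp [hempty]
    · intro η hη
      have hbad : ((u η).filter fun i => ¬ good η i).card ≤ 1 :=
        Finset.card_le_one.2 fun i hi i' hi' =>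
          bad_unique η i i' (Finset.mem_filter.1 hi).2 (Finset.mem_filter.1 hi').2
      have hsplit := Finset.card_filter_add_card_filter_not (s := u η) (good η)
      have := hu η hη.1
      omega

end Branches

/-! ### The group of a family of branches -/

/-- The coordinates of the divisible group containing all `branchGroup`s: `z` is the distinguished
element, `x i n t` belongs to the truncation `t` in direction `i` at level `n`, and `y η` to the
branch `η`. -/
inductive Generator (ι Λ : Type*)
  | z : Generator ι Λ
  | x (i : ι) (n : ℕ) (t : Λ) : Generator ι Λ
  | y (η : Λ) : Generator ι Λ

section BranchGroup

/-- The distinguished element of the groups `branchGroup`. -/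
noncomputable def zVec (ι Λ : Type*) : Generator ι Λ →₀ ℚ :=
  single .z 1

/-- The basis vector of the truncation `t` in direction `i` at level `n`. -/
noncomputable def xVec {ι Λ : Type*} (i : ι) (n : ℕ) (t : Λ) : Generator ι Λ →₀ ℚ :=
  single (.x i n t) 1

/-- The vector `∑ i, x_{i,n,tr i n η} + a η n • z`, which becomes congruent to `-y_{η,n}`
modulo `3`. -/
noncomputable def relSum {ι Λ : Type*} [Fintype ι] (tr : ι → ℕ → Λ → Λ) (a : Λ → ℕ → ℤ) (η : Λ)
    (n : ℕ) : Generator ι Λ →₀ ℚ :=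
  ∑ i, xVec i n (tr i n η) + a η n • zVec ι Λ

/-- The vectors `y_{η,n}`, determined by `3 y_{η,n+1} = y_{η,n} + relSum tr a η n`. -/
noncomputable def yVec {ι Λ : Type*} [Fintype ι] (tr : ι → ℕ → Λ → Λ) (a : Λ → ℕ → ℤ) (η : Λ) :
    ℕ → Generator ι Λ →₀ ℚ
  | 0 => single (.y η) 1
  | n + 1 => (3 : ℚ)⁻¹ • (yVec tr a η n + relSum tr a η n)

variable {ι Λ : Type*} [Fintype ι] {tr : ι → ℕ → Λ → Λ} {a : Λ → ℕ → ℤ}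

theorem three_smul_yVec_succ (η : Λ) (n : ℕ) :
    (3 : ℤ) • yVec tr a η (n + 1) = yVec tr a η n + relSum tr a η n := by
  rw [← Int.cast_smul_eq_zsmul ℚ, yVec, smul_smul]
  norm_num

theorem relSum_apply_y (η ν : Λ) (n : ℕ) : relSum tr a η n (.y ν) = 0 := by
  simp [relSum, xVec, zVec]

open Classical in
theorem relSum_apply_x (η : Λ) (n : ℕ) (i : ι) (m : ℕ) (t : Λ) :
    relSum tr a η n (.x i m t) = if m = n ∧ tr i m η = t then 1 else 0 := by
  simp only [relSum, xVec, zVec, Finsupp.add_apply, finsetSum_apply, Finsupp.smul_apply,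
    single_apply, Generator.x.injEq, reduceCtorEq, if_false, smul_zero, add_zero]
  rw [Finset.sum_eq_single_of_mem i (Finset.mem_univ i) fun j _ hj => if_neg fun h => hj h.1]
  grind

open Classical in
theorem yVec_apply_y (η ν : Λ) (n : ℕ) :
    yVec tr a η n (.y ν) = if η = ν then (3 : ℚ)⁻¹ ^ n else 0 := by
  induction n with
  | zero => simp [yVec, single_apply]
  | succ n ih => simp [yVec, ih, relSum_apply_y, pow_succ']

open Classical in
theorem yVec_apply_x (η : Λ) (n : ℕ) (i : ι) (m : ℕ) (t : Λ) :
    yVec tr a η n (.x i m t) = if m < n ∧ tr i m η = t then (3 : ℚ)⁻¹ ^ (n - m) else 0 := by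
  induction n with
  | zero => simp [yVec]
  | succ n ih =>
    rw [yVec, Finsupp.smul_apply, Finsupp.add_apply, ih, relSum_apply_x]
    rcases lt_trichotomy m n with hlt | rfl | hgt
    · simp [hlt, hlt.ne, Nat.lt_succ_of_lt hlt, Nat.succ_sub hlt.le, pow_succ']
    · simp
    · simp [hgt.not_gt, hgt.ne', Nat.not_lt.2 (Nat.succ_le_of_lt hgt)]

variable (tr a) in
/-- The subgroup generated by `z`, all `x_{i,n,t}` and the `y_{η,n}` for the branches `η ∈ M`. -/
noncomputable def branchGroup (M : Set Λ) : Submodule ℤ (Generator ι Λ →₀ ℚ) :=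
  Submodule.span ℤ ({zVec ι Λ} ∪ {v | ∃ i n t, xVec i n t = v} ∪
    {v | ∃ η ∈ M, ∃ n, yVec tr a η n = v})

theorem zVec_mem_branchGroup (M : Set Λ) : zVec ι Λ ∈ branchGroup tr a M :=
  Submodule.subset_span (.inl (.inl rfl))

variable (tr a) in
/-- The distinguished element `z` as an element of `branchGroup tr a M`. -/
noncomputable def zElement (M : Set Λ) : branchGroup tr a M :=
  ⟨zVec ι Λ, zVec_mem_branchGroup M⟩

theorem xVec_mem_branchGroup (M : Set Λ) (i : ι) (n : ℕ) (t : Λ) :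
    xVec i n t ∈ branchGroup tr a M :=
  Submodule.subset_span (.inl (.inr ⟨i, n, t, rfl⟩))

theorem yVec_mem_branchGroup {M : Set Λ} {η : Λ} (hη : η ∈ M) (n : ℕ) :
    yVec tr a η n ∈ branchGroup tr a M :=
  Submodule.subset_span (.inr ⟨η, hη, n, rfl⟩)

theorem branchGroup_le {M : Set Λ} {S : Submodule ℤ (Generator ι Λ →₀ ℚ)} (hz : zVec ι Λ ∈ S)
    (hx : ∀ i n t, xVec i n t ∈ S) (hy : ∀ η ∈ M, ∀ n, yVec tr a η n ∈ S) :
    branchGroup tr a M ≤ S := by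
  refine Submodule.span_le.2 ?_
  rintro _ ((rfl | ⟨i, n, t, rfl⟩) | ⟨η, hη, n, rfl⟩)
  exacts [hz, hx i n t, hy η hη n]

theorem branchGroup_mono : Monotone (branchGroup tr a) := fun _ _ h =>
  branchGroup_le (zVec_mem_branchGroup _) (xVec_mem_branchGroup _)
    fun _ hη => yVec_mem_branchGroup (h hη)

theorem exists_finset_mem_branchGroup {M : Set Λ} {v : Generator ι Λ →₀ ℚ}
    (hv : v ∈ branchGroup tr a M) : ∃ F : Finset Λ, v ∈ branchGroup tr a (F : Set Λ) := by
  have hmono : Monotone fun F : Finset Λ => branchGroup tr a (F : Set Λ) := fun _ _ h =>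
    branchGroup_mono (Finset.coe_subset.2 h)
  have hle : branchGroup tr a M ≤ ⨆ F : Finset Λ, branchGroup tr a (F : Set Λ) :=
    branchGroup_le (Submodule.mem_iSup_of_mem ∅ (zVec_mem_branchGroup _))
      (fun i n t => Submodule.mem_iSup_of_mem ∅ (xVec_mem_branchGroup _ i n t))
      fun η _ n => Submodule.mem_iSup_of_mem {η} (yVec_mem_branchGroup (by simp) n)
  exact (Submodule.mem_iSup_of_directed _ hmono.directed_le).1 (hle hv)

end BranchGroup

/-! ### A basis from a free ranking -/

/-- The ranking `ρ` of `M` is free, as witnessed for `η ∈ M` by the direction `l η` and all levels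
from `N η` on. -/
structure IsFreeRankingWith {ι Λ T W : Type*} [LT W] (tr : ι → ℕ → Λ → T) {M : Set Λ} (ρ : Λ → W)
    (l : M → ι) (N : M → ℕ) : Prop where
  injOn : Set.InjOn ρ M
  ne : ∀ η : M, ∀ n ≥ N η, ∀ ν ∈ M, ρ ν < ρ η → tr (l η) n ν ≠ tr (l η) n η

theorem IsFreeRanking.exists_isFreeRankingWith {ι Λ T W : Type*} [LT W] {tr : ι → ℕ → Λ → T}
    {u : Λ → Finset ι} {M : Set Λ} {ρ : Λ → W} (h : IsFreeRanking tr u M ρ) :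
    ∃ (l : M → ι) (N : M → ℕ), IsFreeRankingWith tr ρ l N := by
  choose l _ hl using fun η : M => h.2 η η.2
  choose N hN using fun η : M => eventually_atTop.1 (hl η)
  exact ⟨l, N, h.1, hN⟩

section Basis

variable {ι Λ : Type*} (tr : ι → ℕ → Λ → Λ) (a : Λ → ℕ → ℤ) {M : Set Λ} (l : M → ι) (N : M → ℕ)

/-- The coordinates `z` and `x_{i,n,t}` whose basis vectors remain in the basis `branchBasis`;
the others, `x_{l η, n, tr (l η) n η}` for `n ≥ N η`, are traded for the vectors `y_{η,n}`. -/
def freeGenerators : Set (Generator ι Λ) :=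
  {g | (∀ η, g ≠ .y η) ∧ ∀ (η : M) (n), N η ≤ n → g ≠ .x (l η) n (tr (l η) n η)}

/-- The coordinate on which a vector of `branchBasisVec` leads all those of lower rank. -/
def branchPivot : freeGenerators tr l N ⊕ M × ℕ → Generator ι Λ
  | .inl g => g
  | .inr (η, 0) => .y η
  | .inr (η, j + 1) => .x (l η) (N η + j) (tr (l η) (N η + j) η)

variable {tr l N} in
theorem z_mem_freeGenerators : Generator.z ∈ freeGenerators tr l N :=
  ⟨by simp, by simp⟩

variable {tr l N} in
theorem branchPivot_inr_notMem_freeGenerators (p : M × ℕ) :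
    branchPivot tr l N (.inr p) ∉ freeGenerators tr l N := by
  rcases p with ⟨η, _ | j⟩
  · exact fun h => h.1 η rfl
  · exact fun h => h.2 η (N η + j) (Nat.le_add_right _ _) rfl

variable [Fintype ι]

/-- The members of the basis `branchBasis`, as vectors. -/
noncomputable def branchBasisVec : freeGenerators tr l N ⊕ M × ℕ → Generator ι Λ →₀ ℚ :=
  Sum.elim (fun g => single g.1 1) fun p => yVec tr a p.1 (N p.1 + p.2)

variable {tr a l N}

theorem branchBasisVec_apply_branchPivot_self (p : freeGenerators tr l N ⊕ M × ℕ) :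
    branchBasisVec tr a l N p (branchPivot tr l N p) ≠ 0 := by
  rcases p with g | ⟨η, _ | j⟩
  · simp [branchBasisVec, branchPivot]
  · simp [branchBasisVec, branchPivot, yVec_apply_y]
  · simp [branchBasisVec, branchPivot, yVec_apply_x]

variable {W : Type*} [LinearOrder W] {ρ : Λ → W}

theorem yVec_apply_branchPivot_of_le (h : IsFreeRankingWith tr ρ l N) {p q : M × ℕ} (hne : q ≠ p)
    (hle : toLex (ρ q.1, q.2) ≤ toLex (ρ p.1, p.2)) :
    yVec tr a q.1 (N q.1 + q.2) (branchPivot tr l N (.inr p)) = 0 := by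
  obtain ⟨η, j⟩ := p
  obtain ⟨ν, k⟩ := q
  have hcases : ρ ν < ρ η ∨ ν = η ∧ k < j := by
    rcases Prod.Lex.toLex_le_toLex.1 hle with hlt | ⟨heq, hkj⟩
    · exact .inl hlt
    · obtain rfl : ν = η := Subtype.ext (h.injOn ν.2 η.2 heq)
      exact .inr ⟨rfl, lt_of_le_of_ne hkj fun hk => hne (congrArg (Prod.mk ν) hk)⟩
  rcases j with _ | j
  · rcases hcases with hlt | ⟨-, hk⟩
    · exact (yVec_apply_y _ _ _).trans (if_neg fun heq => hlt.ne (congrArg ρ heq))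
    · exact absurd hk (Nat.not_lt_zero k)
  · refine (yVec_apply_x _ _ _ _ _).trans (if_neg ?_)
    rintro ⟨hlevel, htr⟩
    rcases hcases with hlt | ⟨rfl, hk⟩
    · exact h.ne η _ (Nat.le_add_right _ _) ν ν.2 hlt htr
    · change N ν + j < N ν + k at hlevel
      omega

theorem linearIndependent_branchBasisVec (h : IsFreeRankingWith tr ρ l N) :
    LinearIndependent ℤ (branchBasisVec tr a l N) := by
  let rank : freeGenerators tr l N ⊕ M × ℕ → WithBot (W ×ₗ ℕ) :=
    Sum.elim (fun _ => ⊥) fun p => ((toLex (ρ p.1, p.2) : W ×ₗ ℕ) : WithBot (W ×ₗ ℕ))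
  refine linearIndependent_of_triangular rank (fun p => lapply (branchPivot tr l N p))
    branchBasisVec_apply_branchPivot_self ?_
  rintro (g | p) (g' | q) hne hle
  · exact single_eq_of_ne fun heq => hne (congrArg Sum.inl (Subtype.ext heq.symm))
  · exact absurd (le_bot_iff.1 hle) WithBot.coe_ne_bot
  · exact single_eq_of_ne fun heq => branchPivot_inr_notMem_freeGenerators p (heq ▸ g'.2)
  · exact yVec_apply_branchPivot_of_le h (fun heq => hne (congrArg Sum.inr heq))
      (WithBot.coe_le_coe.1 hle)

theorem single_mem_span_branchBasisVec {g : Generator ι Λ} (hg : g ∈ freeGenerators tr l N) :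
    single g 1 ∈ Submodule.span ℤ (Set.range (branchBasisVec tr a l N)) :=
  Submodule.subset_span ⟨.inl ⟨g, hg⟩, rfl⟩

theorem zVec_mem_span_branchBasisVec :
    zVec ι Λ ∈ Submodule.span ℤ (Set.range (branchBasisVec tr a l N)) :=
  single_mem_span_branchBasisVec z_mem_freeGenerators

theorem yVec_mem_span_branchBasisVec_of_ge (η : M) {n : ℕ} (hn : N η ≤ n) :
    yVec tr a η n ∈ Submodule.span ℤ (Set.range (branchBasisVec tr a l N)) := by
  obtain ⟨j, rfl⟩ := Nat.exists_eq_add_of_le hn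
  exact Submodule.subset_span ⟨.inr (η, j), rfl⟩

theorem xVec_mem_span_branchBasisVec_of_traded {i : ι} {n : ℕ} {t : Λ}
    (htraded : ∀ η : M, N η ≤ n → i = l η → t = tr i n η →
      xVec (l η) n (tr (l η) n η) ∈ Submodule.span ℤ (Set.range (branchBasisVec tr a l N))) :
    xVec i n t ∈ Submodule.span ℤ (Set.range (branchBasisVec tr a l N)) := by
  by_cases hfree : Generator.x i n t ∈ freeGenerators tr l N
  · exact single_mem_span_branchBasisVec hfree
  · simp only [freeGenerators, ne_eq, reduceCtorEq, not_false_eq_true, implies_true, true_and,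
      Set.mem_ofPred_eq, not_forall, not_not, Generator.x.injEq] at hfree
    obtain ⟨η, _, hn, rfl, rfl, rfl⟩ := hfree
    exact htraded η hn rfl rfl

-- The relation `3 y_{η,n+1} = y_{η,n} + relSum` expresses the traded coordinate of `η` by vectors
-- of the basis and coordinates traded for branches of lower rank.
theorem xVec_direction_mem_span_branchBasisVec [WellFoundedLT W] (h : IsFreeRankingWith tr ρ l N)
    (η : M) {n : ℕ} (hn : N η ≤ n) :
    xVec (l η) n (tr (l η) n η) ∈ Submodule.span ℤ (Set.range (branchBasisVec tr a l N)) := by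
  classical
  induction hα : ρ η using WellFoundedLT.induction generalizing η with
  | ind α ih =>
  subst hα
  have hrel := three_smul_yVec_succ (tr := tr) (a := a) η.1 n
  rw [relSum, ← Finset.add_sum_erase _ _ (Finset.mem_univ (l η))] at hrel
  have hsolve : xVec (l η) n (tr (l η) n η) = (3 : ℤ) • yVec tr a η (n + 1) - yVec tr a η n
      - ∑ i ∈ Finset.univ.erase (l η), xVec i n (tr i n η) - a η n • zVec ι Λ := by
    rw [hrel]
    abel
  rw [hsolve]
  refine sub_mem (sub_mem (sub_mem (Submodule.smul_mem _ _ ?_) ?_) (sum_mem fun i hi => ?_))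
    (Submodule.smul_mem _ _ zVec_mem_span_branchBasisVec)
  · exact yVec_mem_span_branchBasisVec_of_ge η (hn.trans n.le_succ)
  · exact yVec_mem_span_branchBasisVec_of_ge η hn
  · refine xVec_mem_span_branchBasisVec_of_traded fun ν hν hiν htr => ?_
    subst hiν
    refine ih (ρ ν) (lt_of_not_ge fun hle => ?_) ν hν rfl
    rcases hle.lt_or_eq with hlt | heq
    · exact h.ne ν n hν η η.2 hlt htr
    · exact Finset.ne_of_mem_erase hi (congrArg l (Subtype.ext (h.injOn ν.2 η.2 heq.symm)))

theorem span_branchBasisVec [WellFoundedLT W] (h : IsFreeRankingWith tr ρ l N) :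
    Submodule.span ℤ (Set.range (branchBasisVec tr a l N)) = branchGroup tr a M := by
  have hx : ∀ i n t, xVec i n t ∈ Submodule.span ℤ (Set.range (branchBasisVec tr a l N)) :=
    fun i n t => xVec_mem_span_branchBasisVec_of_traded fun η hn _ _ =>
      xVec_direction_mem_span_branchBasisVec h η hn
  refine le_antisymm (Submodule.span_le.2 ?_) (branchGroup_le zVec_mem_span_branchBasisVec hx ?_)
  · rintro _ ⟨⟨_ | ⟨i, n, t⟩ | η, hg⟩ | p, rfl⟩
    · exact zVec_mem_branchGroup M
    · exact xVec_mem_branchGroup M i n t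
    · exact absurd rfl (hg.1 η)
    · exact yVec_mem_branchGroup p.1.2 _
  · intro η hη n
    obtain ⟨m, hn, hm⟩ : ∃ m, n ≤ m ∧ N ⟨η, hη⟩ ≤ m := ⟨_, le_max_left _ _, le_max_right _ _⟩
    induction hn using Nat.decreasingInduction with
    | of_succ k _ hk =>
      rw [eq_sub_of_add_eq (three_smul_yVec_succ η k).symm]
      exact sub_mem (Submodule.smul_mem _ _ hk) (add_mem (sum_mem fun i _ => hx _ _ _)
        (Submodule.smul_mem _ _ zVec_mem_span_branchBasisVec))
    | self => exact yVec_mem_span_branchBasisVec_of_ge ⟨η, hη⟩ hm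

variable (a) in
/-- The basis of `branchGroup tr a M` attached to a free ranking of `M`. -/
noncomputable def branchBasis [WellFoundedLT W] (h : IsFreeRankingWith tr ρ l N) :
    Module.Basis (freeGenerators tr l N ⊕ M × ℕ) ℤ (branchGroup tr a M) :=
  (Module.Basis.span (linearIndependent_branchBasisVec h)).map
    (LinearEquiv.ofEq _ _ (span_branchBasisVec h))

theorem coe_branchBasis [WellFoundedLT W] (h : IsFreeRankingWith tr ρ l N)
    (p : freeGenerators tr l N ⊕ M × ℕ) : (branchBasis a h p).1 = branchBasisVec tr a l N p := by
  rw [branchBasis, Module.Basis.map_apply, LinearEquiv.coe_ofEq_apply, Module.Basis.span_apply]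

theorem free_branchGroup [WellFoundedLT W] {u : Λ → Finset ι} (h : IsFreeRanking tr u M ρ) :
    Module.Free ℤ (branchGroup tr a M) := by
  obtain ⟨l, N, hlN⟩ := h.exists_isFreeRankingWith
  exact Module.Free.of_basis (branchBasis a hlN)

theorem exists_retraction_branchGroup [WellFoundedLT W] {u : Λ → Finset ι}
    (h : IsFreeRanking tr u M ρ) :
    ∃ π : branchGroup tr a M →+ ℤ, π (zElement tr a M) = 1 := by
  obtain ⟨l, N, hlN⟩ := h.exists_isFreeRankingWith
  let zIndex : freeGenerators tr l N ⊕ M × ℕ := .inl ⟨.z, z_mem_freeGenerators⟩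
  have hz : branchBasis a hlN zIndex = zElement tr a M :=
    Subtype.ext (coe_branchBasis hlN zIndex)
  refine ⟨((branchBasis a hlN).coord zIndex).toAddMonoidHom, ?_⟩
  rw [← hz, LinearMap.toAddMonoidHom_coe, Module.Basis.coord_apply, Module.Basis.repr_self,
    single_eq_same]

end Basis

/-! ### The group of all branches -/

theorem mk_generator_le {ι Λ : Type u} [Finite ι] [Infinite Λ] : #(Generator ι Λ) ≤ #Λ := by
  have hΛ : ℵ₀ ≤ #Λ := aleph0_le_mk Λ
  let code : Generator ι Λ → Option ((ι × ℕ × Λ) ⊕ Λ)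
    | .z => none
    | .x i n t => some (.inl (i, n, t))
    | .y η => some (.inr η)
  have hcode : Function.Injective code := by
    rintro (_ | _ | _) (_ | _ | _) h <;> simp_all [code]
  calc #(Generator ι Λ) ≤ #(Option ((ι × ℕ × Λ) ⊕ Λ)) := mk_le_of_injective hcode
    _ = #ι * (ℵ₀ * #Λ) + #Λ + 1 := by simp
    _ ≤ #Λ := by
        rw [aleph0_mul_eq hΛ]
        exact add_le_of_le hΛ (add_le_of_le hΛ
          (mul_le_of_le hΛ ((lt_aleph0_of_finite ι).le.trans hΛ) le_rfl) le_rfl)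
          (one_lt_aleph0.le.trans hΛ)

section FullGroup

variable {ι Λ : Type u} [Fintype ι] {tr : ι → ℕ → Λ → Λ} {a : Λ → ℕ → ℤ}

theorem zElement_ne_zero (M : Set Λ) : zElement tr a M ≠ 0 := fun h =>
  single_ne_zero.2 one_ne_zero (congrArg Subtype.val h)

theorem mk_branchGroup_univ [Infinite Λ] : #(branchGroup tr a Set.univ) = #Λ := by
  have hy : Function.Injective (Generator.y : Λ → Generator ι Λ) := fun _ _ => Generator.y.inj
  have : Infinite (Generator ι Λ) := .of_injective _ hy
  apply le_antisymm
  · calc #(branchGroup tr a Set.univ) ≤ #(Generator ι Λ →₀ ℚ) :=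
          mk_le_of_injective Subtype.val_injective
      _ = #(Generator ι Λ) := by simp
      _ ≤ #Λ := mk_generator_le
  · let toGroup : Λ → branchGroup tr a Set.univ := fun η =>
      ⟨yVec tr a η 0, yVec_mem_branchGroup (Set.mem_univ η) 0⟩
    have htoGroup : Function.Injective toGroup := fun η ν h =>
      hy (single_left_injective one_ne_zero (congrArg Subtype.val h))
    exact mk_le_of_injective htoGroup

/-- The inclusion into `branchGroup tr a M` of a subgroup of the full group contained in it. -/
noncomputable def branchGroupInclusion {M : Set Λ} (H : AddSubgroup (branchGroup tr a Set.univ))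
    (hH : ∀ x : H, x.1.1 ∈ branchGroup tr a M) : H →ₗ[ℤ] branchGroup tr a M :=
  ((branchGroup tr a Set.univ).subtype ∘ₗ H.subtype.toIntLinearMap).codRestrict _ hH

theorem exists_mk_le_forall_mem_branchGroup {κ : Cardinal.{u}} (hκ : ℵ₀ ≤ κ)
    {S : Set (branchGroup tr a Set.univ)} (hS : #S ≤ κ) :
    ∃ M : Set Λ, #M ≤ κ ∧ ∀ x : S, x.1.1 ∈ branchGroup tr a M := by
  choose F hF using fun x : S => exists_finset_mem_branchGroup x.1.2
  refine ⟨⋃ x, (F x : Set Λ), ?_, fun x =>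
    branchGroup_mono (Set.subset_iUnion (fun x => (F x : Set Λ)) x) (hF x)⟩
  calc #(⋃ x, (F x : Set Λ)) ≤ Cardinal.sum fun x => #(F x : Set Λ) := mk_iUnion_le_sum_mk
    _ ≤ Cardinal.sum fun _ : S => ℵ₀ :=
        sum_le_sum _ _ fun x => (F x).countable_toSet.le_aleph0
    _ ≤ κ := by
        rw [sum_const']
        exact mul_le_of_le hκ hS hκ

theorem free_addSubgroup_branchGroup {κ : Cardinal.{u}} (hκ : ℵ₀ ≤ κ)
    (hfree : ∀ M : Set Λ, #M ≤ κ → Module.Free ℤ (branchGroup tr a M))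
    (H : AddSubgroup (branchGroup tr a Set.univ)) (hH : #H ≤ κ) : Module.Free ℤ H := by
  obtain ⟨M, hM, hHM⟩ := exists_mk_le_forall_mem_branchGroup hκ hH
  have := hfree M hM
  refine free_of_injective (branchGroupInclusion H hHM) fun x y hxy => ?_
  exact Subtype.ext (Subtype.ext (congrArg (fun v : branchGroup tr a M => v.1) hxy))

theorem isPureAddSubgroup_zmultiples_zElement
    (hretract : ∀ F : Finset Λ, ∃ π : branchGroup tr a (F : Set Λ) →+ ℤ, π (zElement tr a F) = 1) :
    IsPureAddSubgroup (AddSubgroup.zmultiples (zElement tr a Set.univ)) := by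
  refine isPureAddSubgroup_zmultiples_of_local_retractions fun y => ?_
  obtain ⟨F, hF⟩ := exists_finset_mem_branchGroup y.2
  obtain ⟨π, hπ⟩ := hretract F
  let S : AddSubgroup (branchGroup tr a Set.univ) :=
    (branchGroup tr a (F : Set Λ)).toAddSubgroup.comap
      (branchGroup tr a Set.univ).subtype.toAddMonoidHom
  exact ⟨S, zVec_mem_branchGroup _,
    π.comp (branchGroupInclusion S fun x => x.2).toAddMonoidHom, hF, hπ⟩

-- For `φ i n t = f x_{i,n,t}` and `η` as in `hφ`, the integers `b n = f y_{η,n}` would satisfy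
-- `3 * b (n + 1) = b n + 1`.
theorem apply_zElement_ne_one {M : Set Λ}
    (hφ : ∀ φ : ι → ℕ → Λ → ℤ, ∃ η ∈ M, ∀ n, ∑ i, φ i n (tr i n η) + a η n = 1)
    (f : branchGroup tr a M →+ ℤ) : f (zElement tr a M) ≠ 1 := by
  intro hf
  let x : ι → ℕ → Λ → branchGroup tr a M := fun i n t => ⟨_, xVec_mem_branchGroup M i n t⟩
  obtain ⟨η, hηM, hη⟩ := hφ fun i n t => f (x i n t)
  let y : ℕ → branchGroup tr a M := fun n => ⟨_, yVec_mem_branchGroup hηM n⟩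
  have hrel : ∀ n, (3 : ℤ) • y (n + 1) =
      y n + (∑ i, x i n (tr i n η) + a η n • zElement tr a M) := fun n => by
    ext1
    simpa only [x, y, zElement, relSum, Submodule.coe_add, Submodule.coe_sum, Submodule.coe_smul]
      using three_smul_yVec_succ η n
  refine not_forall_three_mul_succ_eq_add_one (fun n => f (y n)) fun n => ?_
  calc 3 * f (y (n + 1)) = f ((3 : ℤ) • y (n + 1)) := by rw [map_zsmul, smul_eq_mul]
    _ = f (y n) + (∑ i, f (x i n (tr i n η)) + a η n) := by
        rw [hrel, map_add, map_add, map_sum, map_zsmul, hf, smul_eq_mul, mul_one]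
    _ = f (y n) + 1 := by rw [hη n]

end FullGroup

/-! ### A black box -/

/-- Tuples of sequences of integer-valued functions, the `i`-th sequence consisting of functions
on `A i`. -/
abbrev Branch {ι : Type u} (A : ι → Type u) : Type u :=
  ∀ i, ℕ → A i → ℤ

/-- The terms of each branch, evaluated at the point of `A i` that the branch sees, guess arbitrary
integer-valued functions of its truncations. -/
def IsBlackBox {ι : Type u} [DecidableEq ι] {A : ι → Type u} (view : ∀ i, Branch A → A i) : Prop :=
  ∀ φ : ι → ℕ → Branch A → ℤ, ∃ η, ∀ i m, φ i m (truncate i m η) = η i m (view i η)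

theorem exists_seq_forall_eq_apply_truncateSeq {X : Type*} [Zero X] (F : ℕ → (ℕ → X) → X) :
    ∃ b : ℕ → X, ∀ m, b m = F m (truncateSeq m b) := by
  let b : ℕ → X := fun m => Nat.strongRecOn m fun m ih =>
    F m fun i => if h : i < m then ih i h else 0
  refine ⟨b, fun m => ?_⟩
  exact Nat.strongRecOn_eq _ _

section Cons

variable {n : ℕ}

/-- The index types of the black box with one more sequence: the functions in the new sequence are
defined on all branches of the old black box. -/
def consIndex (A : Fin n → Type) : Fin (n + 1) → Type :=
  Fin.cons (Branch A) A

variable {A : Fin n → Type}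

/-- The branch with first sequence `b` and remaining sequences `η`. -/
def consBranch (b : ℕ → Branch A → ℤ) (η : Branch A) : Branch (consIndex A) :=
  Fin.cons b η

/-- In its first direction a branch sees all its other sequences, and these see what they saw in
the old black box. -/
def consView (view : ∀ i, Branch A → A i) : ∀ i, Branch (consIndex A) → consIndex A i :=
  Fin.cons (fun η i => η i.succ) fun i η => view i fun j => η j.succ

theorem truncate_zero_consBranch (m : ℕ) (b : ℕ → Branch A → ℤ) (η : Branch A) :
    truncate 0 m (consBranch b η) = consBranch (truncateSeq m b) η :=
  Fin.update_cons_zero (α := fun i => ℕ → consIndex A i → ℤ) b η _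

theorem truncate_succ_consBranch (i : Fin n) (m : ℕ) (b : ℕ → Branch A → ℤ) (η : Branch A) :
    truncate i.succ m (consBranch b η) = consBranch b (truncate i m η) :=
  (Fin.cons_update (α := fun i => ℕ → consIndex A i → ℤ) b η i _).symm

theorem IsBlackBox.cons {view : ∀ i, Branch A → A i} (h : IsBlackBox view) :
    IsBlackBox (consView view) := by
  intro φ
  obtain ⟨b, hb⟩ := exists_seq_forall_eq_apply_truncateSeq fun m s η => φ 0 m (consBranch s η)
  obtain ⟨η, hη⟩ := h fun i m ν => φ i.succ m (consBranch b ν)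
  refine ⟨consBranch b η, Fin.cases (fun m => ?_) fun i m => ?_⟩
  · rw [truncate_zero_consBranch]
    exact (congrFun (hb m) η).symm
  · rw [truncate_succ_consBranch]
    exact hη i m

theorem mk_branch_consIndex (A : Fin n → Type) :
    #(Branch (consIndex A)) = 2 ^ (#(Branch A) * ℵ₀) := by
  have hℵ₀ : ℵ₀ ≤ #(Branch A) * ℵ₀ := le_mul_left (mk_ne_zero _)
  have hseq : #(ℕ → Branch A → ℤ) = 2 ^ (#(Branch A) * ℵ₀) := by
    rw [← power_def, ← power_def, ← power_mul]
    simp only [mk_int, mk_nat]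
    exact power_eq_two_power hℵ₀ ofNat_le_aleph0 hℵ₀
  calc #(Branch (consIndex A)) = #(ℕ → Branch A → ℤ) * #(Branch A) := by
        rw [mul_def]
        exact mk_congr (Fin.consEquiv _).symm
    _ = 2 ^ (#(Branch A) * ℵ₀) := by
        rw [hseq]
        refine mul_eq_left (hℵ₀.trans (cantor _).le) ?_ (mk_ne_zero _)
        exact (le_mul_right aleph0_ne_zero).trans (cantor _).le

end Cons

theorem exists_isBlackBox (n : ℕ) :
    ∃ (A : Fin (n + 1) → Type) (view : ∀ i, Branch A → A i),
      IsBlackBox view ∧ #(Branch A) = beth (n + 1) := by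
  induction n with
  | zero =>
    have hempty : IsBlackBox (A := (Fin.elim0 : Fin 0 → Type)) fun i => i.elim0 :=
      fun _ => ⟨fun i => i.elim0, fun i => i.elim0⟩
    refine ⟨_, _, hempty.cons, ?_⟩
    rw [mk_branch_consIndex]
    simp
  | succ n ih =>
    obtain ⟨A, view, hview, hcard⟩ := ih
    refine ⟨_, _, hview.cons, ?_⟩
    rw [mk_branch_consIndex, hcard, mul_aleph0_eq (aleph0_le_beth _), Nat.cast_succ, ← beth_add_one]

theorem IsBlackBox.exists_sum_add_one_sub_eq_one {ι : Type u} [DecidableEq ι] [Fintype ι]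
    {A : ι → Type u} {view : ∀ i, Branch A → A i} (h : IsBlackBox view)
    (φ : ι → ℕ → Branch A → ℤ) :
    ∃ η, ∀ n, ∑ i, φ i n (truncate i n η) + (1 - ∑ i, η i n (view i η)) = 1 := by
  obtain ⟨η, hη⟩ := h φ
  exact ⟨η, fun n => by simp only [hη, add_sub_cancel]⟩

/-- For every natural number `k` there is an abelian group `G` of
cardinality `ℶ_{k+1}` which is `ℵ_{k+1}`-free, together with a non-zero element `z ∈ G`
such that `ℤz` is a pure subgroup of `G` but `ℤz` is not a direct summand of `G`. -/
theorem stmt1 (k : ℕ) :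
    ∃ (G : Type) (_ : AddCommGroup G) (z : G),
      #G = Cardinal.beth (k + 1) ∧
      (∀ H : AddSubgroup G, #H < Cardinal.aleph (k + 1) → Module.Free ℤ H) ∧
      z ≠ 0 ∧
      IsPureAddSubgroup (AddSubgroup.zmultiples z) ∧
      ¬ ∃ H : AddSubgroup G, IsCompl (AddSubgroup.zmultiples z) H := by
  obtain ⟨A, view, hbox, hcard⟩ := exists_isBlackBox k
  have : Infinite (Branch A) := infinite_iff.2 (hcard ▸ aleph0_le_beth _)
  let a : Branch A → ℕ → ℤ := fun η n => 1 - ∑ i, η i n (view i η)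
  have hrank : ∀ M : Set (Branch A), #M ≤ ℵ_ k →
      ∃ ρ : Branch A → Ordinal.{0}, IsFreeRanking truncate (fun _ => Finset.univ) M ρ :=
    fun M hM => exists_isFreeRanking_truncate k hM (by simp)
  refine ⟨branchGroup truncate a Set.univ, inferInstance, zElement truncate a Set.univ,
    mk_branchGroup_univ.trans hcard, fun H hH => ?_, zElement_ne_zero _, ?_, ?_⟩
  · refine free_addSubgroup_branchGroup (aleph0_le_aleph k) (fun M hM => ?_) H ?_
    · obtain ⟨ρ, hρ⟩ := hrank M hM
      exact free_branchGroup hρ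
    · rwa [← succ_aleph, Order.lt_succ_iff] at hH
  · refine isPureAddSubgroup_zmultiples_zElement fun F => ?_
    obtain ⟨ρ, hρ⟩ := hrank F (F.countable_toSet.le_aleph0.trans (aleph0_le_aleph k))
    exact exists_retraction_branchGroup hρ
  · rintro ⟨H, hH⟩
    obtain ⟨f, hf⟩ := exists_addMonoidHom_apply_eq_one_of_isCompl (zElement_ne_zero _) hH
    refine apply_zElement_ne_one (fun φ => ?_) f hf
    obtain ⟨η, hη⟩ := hbox.exists_sum_add_one_sub_eq_one φ
    exact ⟨η, Set.mem_univ η, hη⟩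
end

section
/- Let x = (S, Λ, a) be an abelian-group k*-parameter, let U be a set of functions from ℕ to S, and let u be a finite set of functions from ℕ to S disjoint from U. If |u| ≤ k ≤ k* for some natural number k and the cardinality of U is at most ℵ_{k*−k}, then G_{U,u} is a subgroup of G_{U∪u} and the quotient group G_{U∪u}/G_{U,u} is a free abelian group. -/
open Cardinal

namespace Sh883

/-- A "restricted tuple": the result of replacing the `m`-th coordinate of a `(k+1)`-tuple
of functions `ℕ → S` by a finite sequence (list) of elements of `S`, keeping the other
coordinates. -/
structure Res (k : ℕ) (S : Type u) where
  m : Fin (k + 1)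
  seq : List S
  rest : (l : Fin (k + 1)) → l ≠ m → ℕ → S

/-- `η̄↾⟨m,n⟩` : replace the `m`-th coordinate of `η̄` by the finite sequence
`⟨η_m(0), …, η_m(n-1)⟩`. -/
def restrictAt {k : ℕ} {S : Type u} (η : Fin (k + 1) → ℕ → S) (m : Fin (k + 1)) (n : ℕ) :
    Res k S :=
  ⟨m, List.ofFn fun i : Fin n => η m i, fun l _ => η l⟩

/-- `Λ_m = {η̄↾⟨m,n⟩ : η̄ ∈ Λ, n ∈ ℕ}`. -/
def LambdaResAt {k : ℕ} {S : Type u} (Λ : Set (Fin (k + 1) → ℕ → S)) (m : Fin (k + 1)) :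
    Set (Res k S) :=
  {ν | ∃ η ∈ Λ, ∃ n : ℕ, ν = restrictAt η m n}

/-- `Λ_0 ∪ … ∪ Λ_k`. -/
def LambdaRes {k : ℕ} {S : Type u} (Λ : Set (Fin (k + 1) → ℕ → S)) : Set (Res k S) :=
  ⋃ m, LambdaResAt Λ m

/-- The generators of the group `G_x`: `x_ν` for `ν ∈ Λ_0 ∪ … ∪ Λ_k`, `y_{η̄,n}` for
`η̄ ∈ Λ`, `n ∈ ℕ`, and `z`. -/
inductive Gen (k : ℕ) (S : Type u) (Λ : Set (Fin (k + 1) → ℕ → S)) : Type u where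
  | X : ↥(LambdaRes Λ) → Gen k S Λ
  | Y : ↥Λ → ℕ → Gen k S Λ
  | Z : Gen k S Λ

/-- `η̄↾⟨m,n⟩` as an element of `Λ_0 ∪ … ∪ Λ_k`, for `η̄ ∈ Λ`. -/
def resMem {k : ℕ} {S : Type u} {Λ : Set (Fin (k + 1) → ℕ → S)} (η : ↥Λ) (m : Fin (k + 1))
    (n : ℕ) : ↥(LambdaRes Λ) :=
  ⟨restrictAt (η : Fin (k + 1) → ℕ → S) m n, Set.mem_iUnion.2 ⟨m, (η : _), η.2, n, rfl⟩⟩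

/-- The relation element `n!·y_{η̄,n+1} − y_{η̄,n} − a(η̄,n)·z − Σ_{m≤k} x_{η̄↾⟨m,n⟩}`. -/
def relEl {k : ℕ} {S : Type u} {Λ : Set (Fin (k + 1) → ℕ → S)} (a : ↥Λ → ℕ → ℤ)
    (η : ↥Λ) (n : ℕ) : FreeAbelianGroup (Gen k S Λ) :=
  (n.factorial : ℤ) • FreeAbelianGroup.of (Gen.Y η (n + 1))
    - FreeAbelianGroup.of (Gen.Y η n)
    - a η n • FreeAbelianGroup.of Gen.Z
    - ∑ m : Fin (k + 1), FreeAbelianGroup.of (Gen.X (resMem η m n))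

/-- The subgroup of relations. -/
def relSub {k : ℕ} {S : Type u} {Λ : Set (Fin (k + 1) → ℕ → S)} (a : ↥Λ → ℕ → ℤ) :
    AddSubgroup (FreeAbelianGroup (Gen k S Λ)) :=
  AddSubgroup.closure {g | ∃ (η : ↥Λ) (n : ℕ), g = relEl a η n}

/-- The group `G_x` of the abelian-group `k`-parameter `x = (S, Λ, a)`. -/
abbrev Gx {k : ℕ} {S : Type u} {Λ : Set (Fin (k + 1) → ℕ → S)} (a : ↥Λ → ℕ → ℤ) : Type u :=
  FreeAbelianGroup (Gen k S Λ) ⧸ relSub a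


/-- The image of the generator `x_ν` in `G_x`. -/
def xg {k : ℕ} {S : Type u} {Λ : Set (Fin (k + 1) → ℕ → S)} (a : ↥Λ → ℕ → ℤ)
    (ν : ↥(LambdaRes Λ)) : Gx a :=
  QuotientAddGroup.mk (FreeAbelianGroup.of (Gen.X ν))

/-- The image of the generator `y_{η̄,n}` in `G_x`. -/
def yg {k : ℕ} {S : Type u} {Λ : Set (Fin (k + 1) → ℕ → S)} (a : ↥Λ → ℕ → ℤ)
    (η : ↥Λ) (n : ℕ) : Gx a :=
  QuotientAddGroup.mk (FreeAbelianGroup.of (Gen.Y η n))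

/-- The image of the distinguished generator `z` in `G_x`. -/
def zg {k : ℕ} {S : Type u} {Λ : Set (Fin (k + 1) → ℕ → S)} (a : ↥Λ → ℕ → ℤ) : Gx a :=
  QuotientAddGroup.mk (FreeAbelianGroup.of Gen.Z)

/-- The subgroup `G_U` of `G_x`, for a set `U` of functions `ℕ → S`: generated by `z`,
the `y_{η̄,n}` for `η̄ ∈ Λ` with all coordinates in `U`, and the `x_{η̄↾⟨m,n⟩}` for
`η̄` a `(k+1)`-tuple of members of `U` with `η̄↾⟨m,n⟩ ∈ Λ_m`. -/
def GU {k : ℕ} {S : Type u} {Λ : Set (Fin (k + 1) → ℕ → S)} (a : ↥Λ → ℕ → ℤ)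
    (U : Set (ℕ → S)) : AddSubgroup (Gx a) :=
  AddSubgroup.closure
    ({zg a}
      ∪ {g | ∃ (η : ↥Λ) (n : ℕ),
          (∀ l : Fin (k + 1), (η : Fin (k + 1) → ℕ → S) l ∈ U) ∧ g = yg a η n}
      ∪ {g | ∃ (η : Fin (k + 1) → ℕ → S) (m : Fin (k + 1)) (n : ℕ) (ν : ↥(LambdaRes Λ)),
          (∀ l : Fin (k + 1), η l ∈ U) ∧ (ν : Res k S) = restrictAt η m n ∧ g = xg a ν})

/-- The subgroup `G_{U,u}` of `G_x`: generated by the union of the subgroups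
`G_{U ∪ (u ∖ {η})}` for `η ∈ u`. -/
def GUu {k : ℕ} {S : Type u} {Λ : Set (Fin (k + 1) → ℕ → S)} (a : ↥Λ → ℕ → ℤ)
    (U u : Set (ℕ → S)) : AddSubgroup (Gx a) :=
  ⨆ η ∈ u, GU a (U ∪ (u \ {η}))

end Sh883

/-!
Call a tuple over `V` a tuple through `w` if every member of `w` is one of its coordinates. In the
manner of Sierpiński and Kuratowski, induction on `j` shows: if `|V| ≤ ℵ_j` and `|w| + j ≤ k*`, the
tuples through `w` over `V` carry an ordinal rank such that each `η` has a coordinate `m` for which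
the other coordinates still cover `w` and only finitely many tuples that agree with `η` off `m` are
ranked no higher than `η`.

Apply this to `V = U ∪ u` and `w = u`. For all large `n`, the generator `x_{η↾⟨m,n⟩}` lies outside
`G_{U,u}` and occurs in no relation of another tuple of smaller or equal rank, so the relation of
`(η, n)` can be solved for it, with coefficient `-1`; the finitely many remaining relations of `η`
are solved for `y_{η,n}`. The relations of the tuples not of this kind are solved over `ℚ` for
`y_{η,n+1}`, which is a generator of `G_{U,u}` or not even one of `G_{U∪u}`. This makes the
relations a triangular system, and the generators of `G_{U∪u}` that are neither generators of
`G_{U,u}` nor solved for form a basis of the quotient; a homomorphism into a `ℚ`-vector space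
detects their independence.
-/

namespace Sh883

section Tuples

variable {ι X : Type*}

/-- The tuples over `V` that take every value in `w`. -/
def tuplesThrough (V w : Set X) : Set (ι → X) :=
  {η | (∀ l, η l ∈ V) ∧ w ⊆ Set.range η}

/-- A ranking of the tuples in `tuplesThrough V w` such that each `η` has a coordinate `m` for which
the other coordinates still cover `w` and only finitely many tuples on the line through `η` in
direction `m` are ranked no higher than `η`. Decompositions of powers of `V` into sets with finite
intersections with lines go back to Sierpiński and Kuratowski. -/
def IsLineFiniteRank {α : Type*} [LE α] (V w : Set X) (ρ : (ι → X) → α) : Prop :=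
  ∀ η ∈ tuplesThrough V w, ∃ m, w ⊆ η '' {m}ᶜ ∧
    {η' ∈ tuplesThrough V w | Set.EqOn η' η {m}ᶜ ∧ ρ η' ≤ ρ η}.Finite

theorem exists_ordinal_rank {T : Type u} {α : Type*} [Preorder α] [WellFoundedLT α] (f : T → α) :
    ∃ ρ : T → Ordinal.{u}, ∀ x y, f x < f y → ρ x < ρ y :=
  ⟨IsWellFounded.rank ((· < ·).onFun f), fun _ _ h => IsWellFounded.rank_lt_of_rel h⟩

theorem exists_subset_image_compl_singleton [Finite ι] {w : Set X} (hw : w.Finite)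
    (hcard : w.ncard < Nat.card ι) {η : ι → X} (hη : w ⊆ Set.range η) :
    ∃ m, w ⊆ η '' {m}ᶜ := by
  have : Nonempty ι := (Nat.card_pos_iff.1 (Nat.zero_lt_of_lt hcard)).1
  choose! position hposition using fun θ (hθ : θ ∈ w) => hη hθ
  have himage : (position '' w).ncard < (Set.univ : Set ι).ncard := by
    rw [Set.ncard_univ]
    exact (Set.ncard_image_le hw).trans_lt hcard
  obtain ⟨m, -, hm⟩ := Set.exists_mem_notMem_of_ncard_lt_ncard himage
  exact ⟨m, fun θ hθ => ⟨position θ, fun h => hm ⟨θ, hθ, h⟩, hposition θ hθ⟩⟩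

theorem exists_injOn_ordinal_card_le {X : Type u} {V : Set X} {c : Cardinal.{u}} (hc : ℵ₀ ≤ c)
    (hV : #V ≤ Order.succ c) :
    ∃ ρ : X → Ordinal.{u}, Set.InjOn ρ V ∧ ∀ a ∈ V, #{b ∈ V | ρ b ≤ ρ a} ≤ c := by
  obtain ⟨_, _, hord⟩ := exists_ord_eq_type_lt V
  let ρ : X → Ordinal := Function.extend Subtype.val (Ordinal.typein (LT.lt (α := V))) 0
  have hρ (v : V) : ρ v = Ordinal.typein LT.lt v := Subtype.val_injective.extend_apply ..
  refine ⟨ρ, fun a ha b hb hab => ?_, fun a ha => ?_⟩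
  · rw [hρ ⟨a, ha⟩, hρ ⟨b, hb⟩] at hab
    exact congrArg Subtype.val (Ordinal.typein_injective _ hab)
  · have hinitial : {b ∈ V | ρ b ≤ ρ a} ⊆ (↑) '' insert (⟨a, ha⟩ : V) (Set.Iio ⟨a, ha⟩) := by
      rintro b ⟨hb, hle⟩
      rw [hρ ⟨a, ha⟩, hρ ⟨b, hb⟩, Ordinal.typein_le_typein, not_lt] at hle
      exact ⟨⟨b, hb⟩, by rwa [Set.Iio_insert], rfl⟩
    refine (mk_le_mk_of_subset hinitial).trans (mk_image_le.trans (mk_insert_le.trans ?_))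
    refine add_le_of_le hc ?_ (one_le_aleph0.trans hc)
    exact Order.lt_succ_iff.1 ((mk_Iio_lt _ hord).trans_le hV)

theorem exists_isLineFiniteRank_nat [Finite ι] {V w : Set X} (hV : V.Countable)
    (hw : w.Finite) (hcard : w.ncard < Nat.card ι) :
    ∃ ρ : (ι → X) → ℕ, IsLineFiniteRank V w ρ := by
  have hcountable : (tuplesThrough V w : Set (ι → X)).Countable :=
    (Set.countable_pi fun _ => hV).mono fun _ hη => hη.1
  obtain ⟨ρ, hρ⟩ := Set.countable_iff_exists_injOn.1 hcountable
  refine ⟨ρ, fun η hη => ?_⟩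
  obtain ⟨m, hm⟩ := exists_subset_image_compl_singleton hw hcard hη.2
  refine ⟨m, hm, .of_finite_image ((Set.finite_Iic (ρ η)).subset ?_) (hρ.mono fun _ h => h.1)⟩
  rintro _ ⟨η', hη', rfl⟩
  exact hη'.2.2

/- The first component of the lexicographic rank is the largest value of the tuple. Since it is
a value in a coordinate other than `m`, it cannot decrease along the line in direction `m`. -/
theorem isLineFiniteRank_of_initial {α β : Type*} [LinearOrder α] [LinearOrder β]
    {V w : Set X} {ρ : X → α} (hρ : Set.InjOn ρ V) {top : (ι → X) → X}
    (htop : ∀ η, top η ∈ Set.range η ∧ ∀ l, ρ (η l) ≤ ρ (top η)) {σ : X → (ι → X) → β}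
    (hσ : ∀ a ∈ V, IsLineFiniteRank {b ∈ V | ρ b ≤ ρ a} (insert a w) (σ a)) :
    IsLineFiniteRank V w fun η => toLex (ρ (top η), σ (top η) η) := by
  have top_mem {η} (hη : η ∈ tuplesThrough V w) : top η ∈ V := by
    obtain ⟨l, hl⟩ := (htop η).1
    exact hl ▸ hη.1 l
  have mem_initial {η} (hη : η ∈ tuplesThrough V w) :
      η ∈ tuplesThrough {b ∈ V | ρ b ≤ ρ (top η)} (insert (top η) w) :=
    ⟨fun l => ⟨hη.1 l, (htop η).2 l⟩, Set.insert_subset (htop η).1 hη.2⟩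
  intro η hη
  obtain ⟨m, hm, hfin⟩ := hσ _ (top_mem hη) η (mem_initial hη)
  refine ⟨m, (Set.subset_insert _ _).trans hm, hfin.subset ?_⟩
  rintro η' ⟨hη', hline, hle⟩
  have htop_le : ρ (top η) ≤ ρ (top η') := by
    obtain ⟨l, hl, hltop⟩ := hm (Set.mem_insert _ _)
    rw [← hltop, ← hline hl]
    exact (htop η').2 l
  obtain hlt | ⟨heq, hσle⟩ := Prod.Lex.toLex_le_toLex.1 hle
  · exact absurd hlt htop_le.not_gt
  · have htop_eq : top η' = top η := hρ (top_mem hη') (top_mem hη) heq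
    rw [htop_eq] at hσle
    exact ⟨htop_eq ▸ mem_initial hη', hline, hσle⟩

theorem IsLineFiniteRank.of_lt_imp_lt {α β : Type*} [LinearOrder α] [LinearOrder β] {V w : Set X}
    {ρ : (ι → X) → α} (hρ : IsLineFiniteRank V w ρ) {σ : (ι → X) → β}
    (h : ∀ η η', ρ η < ρ η' → σ η < σ η') : IsLineFiniteRank V w σ := by
  intro η hη
  obtain ⟨m, hm, hfin⟩ := hρ η hη
  exact ⟨m, hm, hfin.subset fun η' ⟨hη', hline, hle⟩ =>
    ⟨hη', hline, not_lt.1 fun hlt => hle.not_gt (h _ _ hlt)⟩⟩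

theorem exists_isLineFiniteRank {X : Type u} {ι : Type v} [Finite ι] (j : ℕ) {V w : Set X}
    (hw : w.Finite) (hcard : w.ncard + j < Nat.card ι) (hV : #V ≤ ℵ_ j) :
    ∃ ρ : (ι → X) → Ordinal.{max u v}, IsLineFiniteRank V w ρ := by
  induction j generalizing V w with
  | zero =>
    have hcountable : V.Countable := by simpa using hV
    obtain ⟨ρ, hρ⟩ := exists_isLineFiniteRank_nat hcountable hw hcard
    exact ⟨fun η => ρ η, hρ.of_lt_imp_lt fun _ _ h => Nat.cast_lt.2 h⟩
  | succ j ih =>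
    rw [Nat.cast_succ, ← succ_aleph] at hV
    obtain ⟨ρ, hρinj, hρcard⟩ := exists_injOn_ordinal_card_le (aleph0_le_aleph _) hV
    have hnonempty : Nonempty ι := (Nat.card_pos_iff.1 (by omega)).1
    choose topIndex htop using fun η : ι → X => Finite.exists_max fun l => ρ (η l)
    have hinitial : ∀ a ∈ V, ∃ σ : (ι → X) → Ordinal.{max u v},
        IsLineFiniteRank {b ∈ V | ρ b ≤ ρ a} (insert a w) σ := fun a ha =>
      ih (hw.insert a) (by have := Set.ncard_insert_le a w; omega) (hρcard a ha)
    choose! σ hσ using hinitial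
    obtain ⟨τ, hτ⟩ := exists_ordinal_rank fun η : ι → X =>
      toLex (ρ (η (topIndex η)), σ (η (topIndex η)) η)
    exact ⟨τ, (isLineFiniteRank_of_initial hρinj
      (fun η => ⟨Set.mem_range_self _, htop η⟩) hσ).of_lt_imp_lt hτ⟩

end Tuples

section Presentations

open FreeAbelianGroup

theorem coeff_of {X : Type*} [DecidableEq X] (x y : X) :
    coeff x (of y) = if y = x then 1 else 0 := by
  simp [coeff, Finsupp.single_apply]

theorem lift_apply_eq_sum {X F : Type*} [AddCommGroup F] (f : X → F) (g : FreeAbelianGroup X) :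
    lift f g = ∑ x ∈ g.support, coeff x g • f x := by
  conv_lhs => rw [g.eq_sum_support_coeff_smul_of]
  simp

theorem free_quotient_of_linearIndependent {G V ι : Type*} [AddCommGroup G] [AddCommGroup V]
    {A B : AddSubgroup G} {v : ι → G} (hv : ∀ i, v i ∈ B)
    (hB : B ≤ A ⊔ AddSubgroup.closure (Set.range v)) {φ : G →+ V} (hA : A ≤ φ.ker)
    (hli : LinearIndependent ℤ (φ ∘ v)) : Module.Free ℤ (B ⧸ A.addSubgroupOf B) := by
  let mkA : G →+ G ⧸ A := QuotientAddGroup.mk' A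
  let f : B →+ G ⧸ A := mkA.comp B.subtype
  have hker : f.ker = A.addSubgroupOf B := by
    ext b
    exact QuotientAddGroup.eq_zero_iff _
  have hrange : f.range = (Submodule.span ℤ (Set.range (mkA ∘ v))).toAddSubgroup := by
    rw [Submodule.span_int_eq_addSubgroupClosure, Set.range_comp, ← AddMonoidHom.map_closure,
      AddMonoidHom.range_comp, AddSubgroup.range_subtype]
    refine le_antisymm ((AddSubgroup.map_mono hB).trans ?_) (AddSubgroup.map_mono ?_)
    · rw [AddSubgroup.map_sup, QuotientAddGroup.map_mk'_self, bot_sup_eq]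
    · exact (AddSubgroup.closure_le _).2 (Set.range_subset_iff.2 hv)
  have hli' : LinearIndependent ℤ (mkA ∘ v) :=
    .of_comp (QuotientAddGroup.lift A φ hA).toIntLinearMap hli
  have hfree : Module.Free ℤ f.range := hrange ▸ Module.Free.of_basis (.span hli')
  exact .of_equiv ((QuotientAddGroup.quotientAddEquivOfEq hker.symm).trans
    (QuotientAddGroup.quotientKerEquivRange f)).symm.toIntLinearEquiv

variable {X I α : Type*}

/-- The relations `rel i` form a triangular system: the generator `pivot i` occurs in `rel i`, and
otherwise only in relations of larger rank. -/
structure IsTriangular [LT α] (rel : I → FreeAbelianGroup X) (pivot : I → X) (rank : I → α) :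
    Prop where
  coeff_pivot_ne_zero : ∀ i, coeff (pivot i) (rel i) ≠ 0
  rank_lt_of_mem_support : ∀ i j, i ≠ j → pivot i ∈ (rel j).support → rank i < rank j

/-- The subgroup of `FreeAbelianGroup X ⧸ K` generated by the images of the generators in `P`. -/
def generatedBy (K : AddSubgroup (FreeAbelianGroup X)) (P : Set X) :
    AddSubgroup (FreeAbelianGroup X ⧸ K) :=
  AddSubgroup.closure ((fun x => (of x : FreeAbelianGroup X ⧸ K)) '' P)

namespace IsTriangular

variable [Preorder α] {rel : I → FreeAbelianGroup X} {pivot : I → X} {rank : I → α}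

theorem pivot_injective (h : IsTriangular rel pivot rank) : Function.Injective pivot := by
  intro i j hij
  by_contra hne
  refine (h.rank_lt_of_mem_support i j hne ?_).not_gt
    (h.rank_lt_of_mem_support j i (Ne.symm hne) ?_)
  · rw [hij, mem_support_iff]
    exact h.coeff_pivot_ne_zero j
  · rw [← hij, mem_support_iff]
    exact h.coeff_pivot_ne_zero i

theorem lift_extend_eq (h : IsTriangular rel pivot rank) {F : Type*} [AddCommGroup F]
    [DecidableLT α] (base : X → F) (value : I → F) (i : I) :
    lift (Function.extend pivot value base) (rel i) =
      lift (Function.extend pivot (fun j => if rank j < rank i then value j else 0) base) (rel i) +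
        coeff (pivot i) (rel i) • value i := by
  classical
  have hpivot_mem : pivot i ∈ (rel i).support :=
    (mem_support_iff _ _).2 (h.coeff_pivot_ne_zero i)
  rw [lift_apply_eq_sum, lift_apply_eq_sum, ← Finset.add_sum_erase _ _ hpivot_mem,
    ← Finset.add_sum_erase _ _ hpivot_mem, h.pivot_injective.extend_apply,
    h.pivot_injective.extend_apply, if_neg (lt_irrefl _), smul_zero, zero_add, add_comm]
  congr 1
  refine Finset.sum_congr rfl fun x hx => ?_
  obtain ⟨hne, hx⟩ := Finset.mem_erase.1 hx
  by_cases hx_pivot : x ∈ Set.range pivot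
  · obtain ⟨j, rfl⟩ := hx_pivot
    rw [h.pivot_injective.extend_apply, h.pivot_injective.extend_apply,
      if_pos (h.rank_lt_of_mem_support j i (fun hji => hne (hji ▸ rfl)) hx)]
  · rw [Function.extend_apply' _ _ _ hx_pivot, Function.extend_apply' _ _ _ hx_pivot]

variable [WellFoundedLT α]

/- Only pivots of smaller rank and `pivot i` itself occur in `rel i`, so the relation determines the
value at `pivot i` recursively. -/
theorem exists_hom (h : IsTriangular rel pivot rank) {F : Type*} [AddCommGroup F] [Module ℚ F]
    (base : X → F) :
    ∃ φ : FreeAbelianGroup X →+ F,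
      (∀ i, φ (rel i) = 0) ∧ ∀ x ∉ Set.range pivot, φ (of x) = base x := by
  classical
  let solve (i : I) (below : I → F) : F :=
    -((coeff (pivot i) (rel i) : ℚ)⁻¹ • lift (Function.extend pivot below base) (rel i))
  have hwf : WellFounded (InvImage (· < ·) rank) := InvImage.wf rank wellFounded_lt
  let value : I → F :=
    hwf.fix fun i value => solve i fun j => if hj : rank j < rank i then value j hj else 0
  have hvalue (i : I) :
      value i = solve i fun j => if rank j < rank i then value j else 0 := hwf.fix_eq _ i
  refine ⟨lift (Function.extend pivot value base), fun i => ?_, fun x hx => ?_⟩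
  · have hcoeff : (coeff (pivot i) (rel i) : ℚ) ≠ 0 := Int.cast_ne_zero.2 (h.coeff_pivot_ne_zero i)
    rw [h.lift_extend_eq, hvalue, ← Int.cast_smul_eq_zsmul ℚ, smul_neg, smul_inv_smul₀ hcoeff,
      add_neg_cancel]
  · rw [lift_apply_of, Function.extend_apply' _ _ _ hx]

theorem of_mem (h : IsTriangular rel pivot rank) {H : AddSubgroup (FreeAbelianGroup X)}
    (hrel : ∀ i, rel i ∈ H) {P : Set X} (hbase : ∀ x ∈ P, x ∉ Set.range pivot → of x ∈ H)
    (hsupport : ∀ i, pivot i ∈ P → ∀ x ∈ (rel i).support, x ∈ P ∨ of x ∈ H)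
    (hsaturated : ∀ i, pivot i ∈ P →
      coeff (pivot i) (rel i) • of (pivot i) ∈ H → of (pivot i) ∈ H)
    {x : X} (hx : x ∈ P) : of x ∈ H := by
  classical
  by_cases hpivot : x ∈ Set.range pivot
  swap
  · exact hbase x hx hpivot
  obtain ⟨i, rfl⟩ := hpivot
  induction i using (InvImage.wf rank wellFounded_lt).induction with | _ i ih => ?_
  have hpivot_mem : pivot i ∈ (rel i).support :=
    (mem_support_iff _ _).2 (h.coeff_pivot_ne_zero i)
  have hothers : ∑ y ∈ (rel i).support.erase (pivot i), coeff y (rel i) • of y ∈ H := by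
    refine H.sum_mem fun y hy => H.zsmul_mem ?_ _
    obtain ⟨hne, hy⟩ := Finset.mem_erase.1 hy
    rcases hsupport i hx y hy with hyP | hyH
    swap
    · exact hyH
    by_cases hy_pivot : y ∈ Set.range pivot
    · obtain ⟨j, rfl⟩ := hy_pivot
      exact ih j (h.rank_lt_of_mem_support j i (fun hji => hne (hji ▸ rfl)) hy) hyP
    · exact hbase y hyP hy_pivot
  refine hsaturated i hx ((H.add_mem_cancel_right hothers).1 ?_)
  rw [Finset.add_sum_erase _ (fun y => coeff y (rel i) • of y) hpivot_mem,
    ← eq_sum_support_coeff_smul_of]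
  exact hrel i

theorem exists_quotient_hom (h : IsTriangular rel pivot rank) {Q : Set X}
    (hQ : ∀ i, pivot i ∈ Q → ↑(rel i).support ⊆ Q) :
    ∃ φ : FreeAbelianGroup X ⧸ AddSubgroup.closure (Set.range rel) →+ (X →₀ ℚ),
      generatedBy _ Q ≤ φ.ker ∧
        ∀ x ∉ Q, x ∉ Set.range pivot → φ (of x : FreeAbelianGroup X) = Finsupp.single x 1 := by
  classical
  obtain ⟨φ, hφrel, hφbase⟩ := h.exists_hom fun x => if x ∈ Q then 0 else Finsupp.single x (1 : ℚ)
  have hφQ : ∀ x ∈ Q, of x ∈ φ.ker := fun x hx => by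
    refine h.of_mem hφrel (fun y hy hy_pivot => ?_) (fun i hi y hy => .inl (hQ i hi hy))
      (fun i _ hi => ?_) hx
    · rw [AddMonoidHom.mem_ker, hφbase y hy_pivot, if_pos hy]
    · rw [AddMonoidHom.mem_ker, map_zsmul] at hi
      exact (smul_eq_zero.1 hi).resolve_left (h.coeff_pivot_ne_zero i)
  have hK : AddSubgroup.closure (Set.range rel) ≤ φ.ker :=
    (AddSubgroup.closure_le _).2 (Set.range_subset_iff.2 hφrel)
  refine ⟨QuotientAddGroup.lift _ φ hK, ?_, fun x hxQ hx_pivot => ?_⟩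
  · exact (AddSubgroup.closure_le _).2 (Set.image_subset_iff.2 hφQ)
  · exact (hφbase x hx_pivot).trans (if_neg hxQ)

theorem generatedBy_le (h : IsTriangular rel pivot rank) {P Q : Set X}
    (hP : ∀ i, pivot i ∈ P \ Q → IsUnit (coeff (pivot i) (rel i)) ∧ ↑(rel i).support ⊆ P) :
    generatedBy (AddSubgroup.closure (Set.range rel)) P ≤
      generatedBy _ Q ⊔ generatedBy _ ((P \ Q) \ Set.range pivot) := by
  set K := AddSubgroup.closure (Set.range rel)
  set H := generatedBy K Q ⊔ generatedBy K ((P \ Q) \ Set.range pivot)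
  have hQ : ∀ x ∈ Q, ((of x : FreeAbelianGroup X) : FreeAbelianGroup X ⧸ K) ∈ H := fun x hx =>
    AddSubgroup.mem_sup_left (AddSubgroup.subset_closure ⟨x, hx, rfl⟩)
  refine (AddSubgroup.closure_le _).2 (Set.image_subset_iff.2 fun x hx => ?_)
  by_cases hxQ : x ∈ Q
  · exact hQ x hxQ
  refine h.of_mem (H := H.comap (QuotientAddGroup.mk' K)) (P := P \ Q) (fun i => ?_)
    (fun y hy hy_pivot => ?_) (fun i hi y hy => ?_) (fun i hi hmem => ?_) ⟨hx, hxQ⟩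
  · have hrel : (rel i : FreeAbelianGroup X ⧸ K) = 0 :=
      (QuotientAddGroup.eq_zero_iff _).2 (AddSubgroup.subset_closure ⟨i, rfl⟩)
    rw [AddSubgroup.mem_comap, QuotientAddGroup.mk'_apply, hrel]
    exact H.zero_mem
  · exact AddSubgroup.mem_sup_right (AddSubgroup.subset_closure ⟨y, ⟨hy, hy_pivot⟩, rfl⟩)
  · by_cases hyQ : y ∈ Q
    · exact .inr (hQ y hyQ)
    · exact .inl ⟨(hP i hi).2 hy, hyQ⟩
  · rcases Int.isUnit_iff.1 (hP i hi).1 with hc | hc <;> simpa [hc] using hmem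

theorem free_quotient (h : IsTriangular rel pivot rank) {P Q : Set X}
    (hQ : ∀ i, pivot i ∈ Q → ↑(rel i).support ⊆ Q)
    (hP : ∀ i, pivot i ∈ P \ Q → IsUnit (coeff (pivot i) (rel i)) ∧ ↑(rel i).support ⊆ P)
    {K : AddSubgroup (FreeAbelianGroup X)} (hK : K = AddSubgroup.closure (Set.range rel)) :
    Module.Free ℤ (generatedBy K P ⧸ (generatedBy K Q).addSubgroupOf (generatedBy K P)) := by
  subst hK
  obtain ⟨φ, hφQ, hφsingle⟩ := h.exists_quotient_hom hQ
  let v (x : ↥((P \ Q) \ Set.range pivot)) :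
      FreeAbelianGroup X ⧸ AddSubgroup.closure (Set.range rel) := (of x.1 : FreeAbelianGroup X)
  refine free_quotient_of_linearIndependent (v := v)
    (fun x => AddSubgroup.subset_closure ⟨x, x.2.1.1, rfl⟩) ?_ hφQ ?_
  · have hspan := h.generatedBy_le hP
    rwa [generatedBy, generatedBy, generatedBy, Set.image_eq_range _ (_ \ _)] at hspan
  · have hsingle : φ ∘ v = (fun x => Finsupp.single x (1 : ℚ)) ∘ Subtype.val :=
      funext fun x => hφsingle x x.2.1.2 x.2.2
    rw [hsingle]
    exact ((Finsupp.linearIndependent_single_one ℚ X).comp _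
      Subtype.val_injective).restrict_scalars' ℤ

end IsTriangular
end Presentations

section Restrictions

variable {k : ℕ} {S : Type u}

theorem restrictAt_eq_restrictAt_iff {η η' : Fin (k + 1) → ℕ → S} {m m' : Fin (k + 1)} {n n' : ℕ} :
    restrictAt η m n = restrictAt η' m' n' ↔
      m = m' ∧ n = n' ∧ (∀ i < n, η m i = η' m i) ∧ Set.EqOn η η' {m}ᶜ := by
  constructor
  · intro h
    rw [restrictAt, restrictAt, Res.mk.injEq] at h
    obtain ⟨rfl, hseq, hrest⟩ := h
    obtain rfl : n = n' := by simpa using congrArg List.length hseq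
    exact ⟨rfl, rfl, fun i hi => congrFun (List.ofFn_injective hseq) ⟨i, hi⟩,
      fun l hl => congrFun₂ (eq_of_heq hrest) l hl⟩
  · rintro ⟨rfl, rfl, hseq, hrest⟩
    rw [restrictAt, restrictAt, Res.mk.injEq]
    exact ⟨rfl, congrArg List.ofFn (funext fun i => hseq i i.2),
      heq_of_eq (funext₂ fun _ hl => hrest hl)⟩

theorem eventually_restrictAt_ne {η η' : Fin (k + 1) → ℕ → S} (h : η ≠ η') (m : Fin (k + 1)) :
    ∀ᶠ n in Filter.atTop, restrictAt η m n ≠ restrictAt η' m n := by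
  obtain ⟨l, hl⟩ := Function.ne_iff.1 h
  obtain ⟨i, hi⟩ := Function.ne_iff.1 hl
  filter_upwards [Filter.eventually_gt_atTop i] with n hn heq
  obtain ⟨-, -, hseq, hrest⟩ := restrictAt_eq_restrictAt_iff.1 heq
  obtain rfl | hlm := eq_or_ne l m
  · exact hi (hseq i hn)
  · exact hl (hrest hlm)

/-- For each tuple `η` through `w` over `V`, a direction `dir η` and a length `start η` such that
from that length on, `restrictAt η (dir η) n` determines `η` among the tuples through `w` over `V`
that are not of larger rank, while the coordinates other than `dir η` cover `w`. -/
structure IsSeparating {α : Type*} [LT α] (V w : Set (ℕ → S)) (ρ : (Fin (k + 1) → ℕ → S) → α)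
    (dir : (Fin (k + 1) → ℕ → S) → Fin (k + 1)) (start : (Fin (k + 1) → ℕ → S) → ℕ) : Prop where
  subset_image : ∀ η ∈ tuplesThrough V w, w ⊆ η '' {dir η}ᶜ
  rank_lt : ∀ η ∈ tuplesThrough V w, ∀ n, start η ≤ n → ∀ η' ∈ tuplesThrough V w, η ≠ η' →
    restrictAt η (dir η) n = restrictAt η' (dir η) n → ρ η < ρ η'

theorem IsLineFiniteRank.exists_isSeparating {α : Type*} [LinearOrder α] {V w : Set (ℕ → S)}
    {ρ : (Fin (k + 1) → ℕ → S) → α} (hρ : IsLineFiniteRank V w ρ) :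
    ∃ dir start, IsSeparating V w ρ dir start := by
  choose! dir hdir hfin using hρ
  have hstart : ∀ η ∈ tuplesThrough V w, ∃ N, ∀ n, N ≤ n → ∀ η' ∈ tuplesThrough V w, η ≠ η' →
      restrictAt η (dir η) n = restrictAt η' (dir η) n → ρ η < ρ η' := by
    intro η hη
    have hne := (Filter.eventually_all_finite (hfin η hη)).2 fun η' _ =>
      Filter.eventually_imp_distrib_left.2 fun h : η ≠ η' => eventually_restrictAt_ne h (dir η)
    obtain ⟨N, hN⟩ := Filter.eventually_atTop.1 hne
    refine ⟨N, fun n hn η' hη' hηη' heq => not_le.1 fun hle => ?_⟩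
    exact hN n hn η' ⟨hη', (restrictAt_eq_restrictAt_iff.1 heq).2.2.2.symm, hle⟩ hηη' heq
  choose! start hstart using hstart
  exact ⟨dir, start, hdir, hstart⟩

end Restrictions

section Generators

open FreeAbelianGroup

variable {k : ℕ} {S : Type u} {Λ : Set (Fin (k + 1) → ℕ → S)}

/-- The generators of `G_x` that, by definition, generate `G_V`. -/
def gensOver (Λ : Set (Fin (k + 1) → ℕ → S)) (V : Set (ℕ → S)) : Set (Gen k S Λ) :=
  {g | match g with
    | .X ν => ∃ η m n, (∀ l, η l ∈ V) ∧ ν.1 = restrictAt η m n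
    | .Y η _ => ∀ l, η.1 l ∈ V
    | .Z => True}

/-- The generators of `G_x` that, by definition, generate `G_{U,w}`. -/
def gensMissing (Λ : Set (Fin (k + 1) → ℕ → S)) (U w : Set (ℕ → S)) : Set (Gen k S Λ) :=
  ⋃ θ ∈ w, gensOver Λ (U ∪ (w \ {θ}))

theorem gensOver_mono {V V' : Set (ℕ → S)} (h : V ⊆ V') : gensOver Λ V ⊆ gensOver Λ V'
  | .X _, ⟨η, m, n, hη, hν⟩ => ⟨η, m, n, fun l => h (hη l), hν⟩
  | .Y _ _, hη => fun l => h (hη l)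
  | .Z, _ => trivial

theorem GU_eq_generatedBy (a : Λ → ℕ → ℤ) (V : Set (ℕ → S)) :
    GU a V = generatedBy (relSub a) (gensOver Λ V) := by
  refine congrArg AddSubgroup.closure (Set.ext fun g => ⟨?_, ?_⟩)
  · rintro ((rfl | ⟨η, n, hη, rfl⟩) | ⟨η, m, n, ν, hη, hν, rfl⟩)
    · exact ⟨.Z, trivial, rfl⟩
    · exact ⟨.Y η n, hη, rfl⟩
    · exact ⟨.X ν, ⟨η, m, n, hη, hν⟩, rfl⟩
  · rintro ⟨ν | ⟨η, n⟩ | _, hmem, rfl⟩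
    · obtain ⟨η, m, n, hη, hν⟩ := hmem
      exact .inr ⟨η, m, n, ν, hη, hν, rfl⟩
    · exact .inl (.inr ⟨η, n, hmem, rfl⟩)
    · exact .inl (.inl rfl)

theorem GU_mono (a : Λ → ℕ → ℤ) {V V' : Set (ℕ → S)} (h : V ⊆ V') : GU a V ≤ GU a V' := by
  rw [GU_eq_generatedBy, GU_eq_generatedBy]
  exact AddSubgroup.closure_mono (Set.image_mono (gensOver_mono h))

theorem GUu_eq_generatedBy (a : Λ → ℕ → ℤ) (U w : Set (ℕ → S)) :
    GUu a U w = generatedBy (relSub a) (gensMissing Λ U w) := by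
  simp only [GUu, GU_eq_generatedBy, generatedBy, gensMissing, Set.image_iUnion,
    AddSubgroup.closure_iUnion]

theorem GUu_le_GU (a : Λ → ℕ → ℤ) (U w : Set (ℕ → S)) : GUu a U w ≤ GU a (U ∪ w) :=
  iSup₂_le fun _ _ => GU_mono a (Set.union_subset_union_right U Set.sdiff_subset)

theorem relSub_eq_closure_range (a : Λ → ℕ → ℤ) :
    relSub a = AddSubgroup.closure (Set.range fun i : Λ × ℕ => relEl a i.1 i.2) := by
  refine congrArg AddSubgroup.closure (Set.ext fun g => ?_)
  simp [eq_comm]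

theorem coeff_Y_succ_relEl (a : Λ → ℕ → ℤ) (η : Λ) (n : ℕ) :
    coeff (Gen.Y η (n + 1)) (relEl a η n) = n.factorial := by
  classical simp [relEl, coeff_of]

theorem coeff_Y_relEl (a : Λ → ℕ → ℤ) (η : Λ) (n : ℕ) :
    coeff (Gen.Y η n) (relEl a η n) = -1 := by
  classical simp [relEl, coeff_of]

theorem coeff_X_relEl (a : Λ → ℕ → ℤ) (η : Λ) (m : Fin (k + 1)) (n : ℕ) :
    coeff (Gen.X (resMem η m n)) (relEl a η n) = -1 := by
  classical
  have hinj (m' : Fin (k + 1)) : resMem η m' n = resMem η m n ↔ m' = m :=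
    ⟨fun h => (restrictAt_eq_restrictAt_iff.1 (congrArg Subtype.val h)).1, fun h => h ▸ rfl⟩
  simp [relEl, coeff_of, hinj]

theorem eq_of_mem_support_relEl {a : Λ → ℕ → ℤ} {η : Λ} {n : ℕ} {g : Gen k S Λ}
    (hg : g ∈ (relEl a η n).support) :
    g = .Y η (n + 1) ∨ g = .Y η n ∨ g = .Z ∨ ∃ m, g = .X (resMem η m n) := by
  classical
  contrapose! hg
  obtain ⟨hsucc, hY, hZ, hX⟩ := hg
  simp [relEl, coeff_of, hsucc.symm, hY.symm, hZ.symm, fun m => (hX m).symm]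

theorem Y_eq_of_mem_support_relEl {a : Λ → ℕ → ℤ} {η η' : Λ} {n n' : ℕ}
    (h : .Y η n ∈ (relEl a η' n').support) : η = η' ∧ (n = n' + 1 ∨ n = n') := by
  have := eq_of_mem_support_relEl h
  simp only [Gen.Y.injEq, reduceCtorEq, exists_false, or_false] at this
  tauto

theorem restrictAt_eq_of_X_mem_support_relEl {a : Λ → ℕ → ℤ} {η η' : Λ} {m : Fin (k + 1)}
    {n n' : ℕ} (h : .X (resMem η m n) ∈ (relEl a η' n').support) :
    n = n' ∧ restrictAt η.1 m n = restrictAt η'.1 m n := by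
  have := eq_of_mem_support_relEl h
  simp only [Gen.X.injEq, reduceCtorEq, false_or] at this
  obtain ⟨m', hm'⟩ := this
  have heq : restrictAt η.1 m n = restrictAt η'.1 m' n' := congrArg Subtype.val hm'
  obtain ⟨rfl, rfl, -⟩ := restrictAt_eq_restrictAt_iff.1 heq
  exact ⟨rfl, heq⟩

theorem support_relEl_subset_gensOver (a : Λ → ℕ → ℤ) {η : Λ} {V : Set (ℕ → S)}
    (hη : ∀ l, η.1 l ∈ V) (n : ℕ) : ↑(relEl a η n).support ⊆ gensOver Λ V := by
  intro g hg
  obtain rfl | rfl | rfl | ⟨m, rfl⟩ := eq_of_mem_support_relEl hg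
  · exact hη
  · exact hη
  · trivial
  · exact ⟨η, m, n, hη, rfl⟩

theorem support_relEl_subset_gensMissing (a : Λ → ℕ → ℤ) {η : Λ} {U w : Set (ℕ → S)} {n : ℕ}
    (hη : .Y η n ∈ gensMissing Λ U w) (n' : ℕ) :
    ↑(relEl a η n').support ⊆ gensMissing Λ U w := by
  obtain ⟨θ, hθ, hmem⟩ := Set.mem_iUnion₂.1 hη
  exact (support_relEl_subset_gensOver a hmem n').trans
    (Set.subset_biUnion_of_mem (u := fun θ => gensOver Λ (U ∪ (w \ {θ}))) hθ)

theorem Y_mem_gensMissing {η : Λ} {U w : Set (ℕ → S)} (hη : ∀ l, η.1 l ∈ U ∪ w)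
    (hnot : η.1 ∉ tuplesThrough (U ∪ w) w) (n : ℕ) : .Y η n ∈ gensMissing Λ U w := by
  obtain ⟨θ, hθ, hrange⟩ := Set.not_subset.1 fun hw => hnot ⟨hη, hw⟩
  exact Set.mem_iUnion₂.2 ⟨θ, hθ, fun l => (hη l).imp_right fun hl => ⟨hl, fun h => hrange ⟨l, h⟩⟩⟩

theorem notMem_union_sdiff_singleton {X : Type*} {U w : Set X} (hdisj : Disjoint U w) {θ : X}
    (hθ : θ ∈ w) : θ ∉ U ∪ (w \ {θ})
  | .inl hU => Set.disjoint_left.1 hdisj hU hθ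
  | .inr hw => hw.2 rfl

theorem Y_notMem_gensMissing {η : Λ} {U w : Set (ℕ → S)} (hdisj : Disjoint U w)
    (hη : w ⊆ Set.range η.1) (n : ℕ) : .Y η n ∉ gensMissing Λ U w := by
  intro hmem
  obtain ⟨θ, hθ, hover⟩ := Set.mem_iUnion₂.1 hmem
  obtain ⟨l, rfl⟩ := hη hθ
  exact notMem_union_sdiff_singleton hdisj hθ (hover l)

theorem X_notMem_gensMissing {η : Λ} {U w : Set (ℕ → S)} {m : Fin (k + 1)} (hdisj : Disjoint U w)
    (hη : w ⊆ η.1 '' {m}ᶜ) (n : ℕ) : .X (resMem η m n) ∉ gensMissing Λ U w := by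
  intro hmem
  obtain ⟨θ, hθ, η', m', n', hη', heq⟩ := Set.mem_iUnion₂.1 hmem
  obtain ⟨l, hl, rfl⟩ := hη hθ
  refine notMem_union_sdiff_singleton hdisj hθ ?_
  rw [(restrictAt_eq_restrictAt_iff.1 heq).2.2.2 hl] at hη' ⊢
  exact hη' l

end Generators

section Pivots

open FreeAbelianGroup

variable {k : ℕ} {S : Type u} {Λ : Set (Fin (k + 1) → ℕ → S)} {α : Type*}

open scoped Classical in
/-- The generator for which the relation indexed by `(η, n)` is solved. It has coefficient `-1`
when `η ∈ T`, and `n!` otherwise. -/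
noncomputable def pivot (T : Set (Fin (k + 1) → ℕ → S))
    (dir : (Fin (k + 1) → ℕ → S) → Fin (k + 1)) (start : (Fin (k + 1) → ℕ → S) → ℕ)
    (i : Λ × ℕ) : Gen k S Λ :=
  if i.1.1 ∈ T then
    if start i.1 ≤ i.2 then .X (resMem i.1 (dir i.1) i.2) else .Y i.1 i.2
  else .Y i.1 (i.2 + 1)

open scoped Classical in
/-- The order in which the relations are solved for their pivots: those of tuples in `T` come first,
ordered by `ρ`. For a fixed `η ∈ T` the relations with `n < start η` are solved by descending `n`,
because their pivot `Y η n` also occurs in the relation of `(η, n - 1)`; the truncated subtraction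
puts the relations with `start η ≤ n` before these. -/
noncomputable def pivotRank (T : Set (Fin (k + 1) → ℕ → S)) (ρ : (Fin (k + 1) → ℕ → S) → α)
    (start : (Fin (k + 1) → ℕ → S) → ℕ) (i : Λ × ℕ) : WithTop α ×ₗ ℕ :=
  if i.1.1 ∈ T then toLex (↑(ρ i.1), start i.1 - i.2) else toLex (⊤, i.2)

variable {T : Set (Fin (k + 1) → ℕ → S)} {ρ : (Fin (k + 1) → ℕ → S) → α}
  {dir : (Fin (k + 1) → ℕ → S) → Fin (k + 1)} {start : (Fin (k + 1) → ℕ → S) → ℕ}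

theorem coeff_pivot_of_mem (a : Λ → ℕ → ℤ) {i : Λ × ℕ} (hi : i.1.1 ∈ T) :
    coeff (pivot T dir start i) (relEl a i.1 i.2) = -1 := by
  rw [pivot, if_pos hi]
  split_ifs
  · exact coeff_X_relEl ..
  · exact coeff_Y_relEl ..

theorem coeff_pivot_ne_zero (a : Λ → ℕ → ℤ) (i : Λ × ℕ) :
    coeff (pivot T dir start i) (relEl a i.1 i.2) ≠ 0 := by
  by_cases hi : i.1.1 ∈ T
  · rw [coeff_pivot_of_mem a hi]
    decide
  · rw [pivot, if_neg hi, coeff_Y_succ_relEl]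
    exact_mod_cast i.2.factorial_ne_zero

namespace IsSeparating

variable [Preorder α] {V w : Set (ℕ → S)}

theorem isTriangular (h : IsSeparating V w ρ dir start) (a : Λ → ℕ → ℤ) :
    IsTriangular (fun i : Λ × ℕ => relEl a i.1 i.2) (pivot (tuplesThrough V w) dir start)
      (pivotRank (tuplesThrough V w) ρ start) where
  coeff_pivot_ne_zero := coeff_pivot_ne_zero a
  rank_lt_of_mem_support := by
    rintro ⟨η, n⟩ ⟨η', n'⟩ hne hmem
    by_cases hη : η.1 ∈ tuplesThrough V w
    · by_cases hn : start η ≤ n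
      · simp only [pivot, if_pos hη, if_pos hn] at hmem
        obtain ⟨rfl, heq⟩ := restrictAt_eq_of_X_mem_support_relEl hmem
        have hηη' : η.1 ≠ η'.1 := fun heq => hne (by rw [Subtype.ext heq])
        by_cases hη' : η'.1 ∈ tuplesThrough V w
        · simpa [pivotRank, hη, hη', Prod.Lex.toLex_lt_toLex] using
            .inl (h.rank_lt η hη n hn η' hη' hηη' heq)
        · simp [pivotRank, hη, hη', Prod.Lex.toLex_lt_toLex]
      · simp only [pivot, if_pos hη, if_neg hn] at hmem
        obtain ⟨rfl, rfl | rfl⟩ := Y_eq_of_mem_support_relEl hmem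
        · have hlt : start η - (n' + 1) < start η - n' := by omega
          simpa [pivotRank, hη, Prod.Lex.toLex_lt_toLex] using hlt
        · exact absurd rfl hne
    · simp only [pivot, if_neg hη] at hmem
      obtain ⟨rfl, hn | rfl⟩ := Y_eq_of_mem_support_relEl hmem
      · exact absurd (by rw [Nat.succ_injective hn]) hne
      · simp [pivotRank, hη, Prod.Lex.toLex_lt_toLex]

theorem pivot_notMem_gensMissing {U : Set (ℕ → S)} (h : IsSeparating V w ρ dir start)
    (hdisj : Disjoint U w) {i : Λ × ℕ} (hi : i.1.1 ∈ tuplesThrough V w) :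
    pivot (tuplesThrough V w) dir start i ∉ gensMissing Λ U w := by
  rw [pivot, if_pos hi]
  split_ifs
  · exact X_notMem_gensMissing hdisj (h.subset_image _ hi) _
  · exact Y_notMem_gensMissing hdisj hi.2 _

theorem free_quotient [WellFoundedLT α] {U : Set (ℕ → S)}
    (h : IsSeparating (U ∪ w) w ρ dir start) (hdisj : Disjoint U w) (a : Λ → ℕ → ℤ) :
    Module.Free ℤ (GU a (U ∪ w) ⧸ (GUu a U w).addSubgroupOf (GU a (U ∪ w))) := by
  rw [GU_eq_generatedBy, GUu_eq_generatedBy]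
  refine (h.isTriangular a).free_quotient (fun i hi => ?_) (fun i ⟨hiP, hiQ⟩ => ?_)
    (relSub_eq_closure_range a)
  · have hnot : i.1.1 ∉ tuplesThrough (U ∪ w) w := fun hmem =>
      h.pivot_notMem_gensMissing hdisj hmem hi
    rw [pivot, if_neg hnot] at hi
    exact support_relEl_subset_gensMissing a hi i.2
  · have hmem : i.1.1 ∈ tuplesThrough (U ∪ w) w := by
      by_contra hnot
      rw [pivot, if_neg hnot] at hiP hiQ
      exact hiQ (Y_mem_gensMissing hiP hnot _)
    rw [coeff_pivot_of_mem a hmem]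
    exact ⟨isUnit_one.neg, support_relEl_subset_gensOver a hmem.1 i.2⟩

end IsSeparating

end Pivots

end Sh883

open Sh883 in
/-- Let `x = (S, Λ, a)` be an abelian-group `k*`-parameter, `U` a set of
functions `ℕ → S`, and `u` a finite set of functions `ℕ → S` disjoint from `U`.  If
`|u| ≤ k ≤ k*` and `|U| ≤ ℵ_{k*−k}`, then `G_{U,u}` is a subgroup of `G_{U∪u}` and the
quotient `G_{U∪u}/G_{U,u}` is a free abelian group. -/
theorem stmt5 {kst : ℕ} {S : Type u} (Λ : Set (Fin (kst + 1) → ℕ → S)) (a : ↥Λ → ℕ → ℤ)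
    (U u : Set (ℕ → S)) (hufin : u.Finite) (hdisj : Disjoint U u)
    (k : ℕ) (hk : k ≤ kst) (hu : u.ncard ≤ k) (hU : #U ≤ Cardinal.aleph (kst - k)) :
    GUu a U u ≤ GU a (U ∪ u) ∧
      Module.Free ℤ (↥(GU a (U ∪ u)) ⧸ (GUu a U u).addSubgroupOf (GU a (U ∪ u))) := by
  refine ⟨GUu_le_GU a U u, ?_⟩
  have hcard : #↥(U ∪ u) ≤ ℵ_ (kst - k : ℕ) := by
    rw [Ordinal.natCast_sub]
    refine (mk_union_le U u).trans (add_le_of_le (aleph0_le_aleph _) hU ?_)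
    exact hufin.lt_aleph0.le.trans (aleph0_le_aleph _)
  obtain ⟨ρ, hρ⟩ := exists_isLineFiniteRank (ι := Fin (kst + 1)) (kst - k) hufin
    (by rw [Nat.card_fin]; omega) hcard
  obtain ⟨dir, start, hsep⟩ := hρ.exists_isSeparating
  exact hsep.free_quotient hdisj a
end
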